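/- There is a universal constant C with the following property. Let n, s ≥ 1 and let Z be uniformly distributed on the unit sphere of ℂⁿ ⊗ ℂˢ ≅ ℂ^{ns}. Let B_1, …, B_d be traceless n×n complex Hermitian matrices with tr(B_j B_k) = δ_{jk}. For j = 1, …, d let X_j = ⟨(B_j ⊗ I_s) Z, Z⟩, where B_j ⊗ I_s denotes the Kronecker product of B_j with the s×s identity matrix; equivalently, X_j = tr(ρ B_j) where ρ = tr₂(ZZ*) is the partial trace of the rank-one projection ZZ* over the second factor ℂˢ. Let g be a standard Gaussian random vector in ℝ^d. Then W₁( √(n(ns+1)) · X , g ) ≤ (C/√s) · Σ_{j=1}^d ‖B_j‖₄², where ‖B‖₄ = (tr(B⁴))^{1/4}. -/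

import Mathlib

open MeasureTheory ProbabilityTheory Matrix
open scoped Matrix Kronecker

universe u

/-!
Along the orbits of the unitary group, invariance of the uniform measure on the sphere yields an
integration-by-parts formula: with `N = n * s`, summing it over the matrix units shows that the
vector of observables `r • (⟨A k Z, Z⟩)ₖ`, with `A k` Hermitian and traceless, has a Stein kernel
`T`, equal to `r ^ 2 / N` times the covariance matrix of the `A k` in the state `Z`. Interpolating
along `cos θ g + sin θ X` and integrating by parts in both variables bounds the Wasserstein distance
to the standard Gaussian by `𝔼 ‖T - 1‖` in the Frobenius norm. The second moments of quadratic forms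
on the sphere, together with Cauchy–Schwarz for traces, bound this by `4 * ∑ k, ‖A k‖₄²` when
`r ^ 2 = N * (N + 1)`. Taking `A k = (B k ⊗ I) / √s` keeps the family orthonormal and gives
`‖A k‖₄² = ‖B k‖₄² / √s`.
-/

section Smoothing

open ContinuousLinearMap
open scoped Convolution NNReal

theorem lipschitzWith_convolution_left {G E E' F : Type*} [NormedAddCommGroup G]
    [MeasurableSpace G] [BorelSpace G] [NormedAddCommGroup E] [NormedSpace ℝ E]
    [NormedAddCommGroup E'] [NormedSpace ℝ E'] [NormedAddCommGroup F] [NormedSpace ℝ F]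
    {μ : Measure G} [IsFiniteMeasureOnCompacts μ] (L : E →L[ℝ] E' →L[ℝ] F) {u : G → E}
    {g : G → E'} {K : ℝ≥0} (hu : Continuous u) (hus : HasCompactSupport u)
    (hg : LipschitzWith K g) :
    LipschitzWith (‖L‖₊ * (∫ t, ‖u t‖ ∂μ).toNNReal * K) (u ⋆[L, μ] g) := by
  have integrable_left : Integrable (fun t => ‖u t‖) μ :=
    (hu.integrable_of_hasCompactSupport hus).norm
  have integrable_conv : ∀ x, Integrable (fun t => L (u t) (g (x - t))) μ := fun x => by
    have hgc := hg.continuous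
    exact Continuous.integrable_of_hasCompactSupport (by fun_prop)
      (hus.mono fun t ht hut => ht (by simp only [hut, map_zero, _root_.zero_apply]))
  refine LipschitzWith.of_dist_le_mul fun x y => ?_
  have pointwise_bound : ∀ t, ‖L (u t) (g (x - t)) - L (u t) (g (y - t))‖ ≤
      ‖L‖ * (‖u t‖ * (K * dist x y)) := fun t =>
    calc ‖L (u t) (g (x - t)) - L (u t) (g (y - t))‖
        ≤ ‖L‖ * ‖u t‖ * ‖g (x - t) - g (y - t)‖ := by
          rw [← map_sub]; exact L.le_opNorm₂ _ _
      _ ≤ ‖L‖ * ‖u t‖ * (K * dist x y) := by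
          gcongr
          simpa [dist_eq_norm] using hg.dist_le_mul (x - t) (y - t)
      _ = ‖L‖ * (‖u t‖ * (K * dist x y)) := mul_assoc _ _ _
  rw [dist_eq_norm, convolution_def, convolution_def,
    ← integral_sub (integrable_conv x) (integrable_conv y)]
  calc ‖∫ t, L (u t) (g (x - t)) - L (u t) (g (y - t)) ∂μ‖
      ≤ ∫ t, ‖L‖ * (‖u t‖ * (K * dist x y)) ∂μ :=
        norm_integral_le_of_norm_le ((integrable_left.mul_const _).const_mul _)
          (.of_forall pointwise_bound)
    _ = ↑(‖L‖₊ * (∫ t, ‖u t‖ ∂μ).toNNReal * K) * dist x y := by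
        have : 0 ≤ ∫ t, ‖u t‖ ∂μ := by positivity
        rw [integral_const_mul, integral_mul_const]
        push_cast [Real.coe_toNNReal _ this, coe_nnnorm]
        ring

variable {E : Type*} [NormedAddCommGroup E] [NormedSpace ℝ E] [FiniteDimensional ℝ E]

theorem exists_contDiff_lipschitzWith_dist_le {K : ℝ≥0} {f : E → ℝ} (hf : LipschitzWith K f)
    {ε : ℝ} (hε : 0 < ε) :
    ∃ h : E → ℝ, ContDiff ℝ 2 h ∧ LipschitzWith K h ∧
      (∃ C, LipschitzWith C (fderiv ℝ h)) ∧ ∀ x, dist (h x) (f x) ≤ ε := by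
  borelize E
  let μ : Measure E := Measure.addHaar
  let δ : ℝ := ε / (K + 1)
  have δ_pos : 0 < δ := by positivity
  have K_mul_δ_le : K * δ ≤ ε := by
    rw [mul_div_assoc', div_le_iff₀ (by positivity)]
    nlinarith
  let φ : ContDiffBump (0 : E) := ⟨δ / 2, δ, by positivity, by linarith⟩
  let h : E → ℝ := φ.normed μ ⋆[lsmul ℝ ℝ, μ] f
  have f_int : LocallyIntegrable f μ := hf.continuous.locallyIntegrable
  have ψ_smooth : ContDiff ℝ 2 (φ.normed μ) := φ.contDiff_normed
  have ψ_supp : HasCompactSupport (φ.normed μ) := φ.hasCompactSupport_normed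
  have h_fderiv : fderiv ℝ h = fderiv ℝ (φ.normed μ) ⋆[(lsmul ℝ ℝ).precompL E, μ] f :=
    funext fun x => (ψ_supp.hasFDerivAt_convolution_left (lsmul ℝ ℝ)
      (ψ_smooth.of_le one_le_two) f_int x).fderiv
  refine ⟨h, ψ_supp.contDiff_convolution_left _ ψ_smooth f_int, ?_, ?_, fun x => ?_⟩
  · have norm_lsmul_mul_mass_le : ‖(lsmul ℝ ℝ : ℝ →L[ℝ] ℝ →L[ℝ] ℝ)‖₊ *
        (∫ t, ‖φ.normed μ t‖ ∂μ).toNNReal ≤ 1 := by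
      simp only [Real.norm_of_nonneg (φ.nonneg_normed _), φ.integral_normed, Real.toNNReal_one,
        mul_one]
      exact opNorm_lsmul_le
    exact (lipschitzWith_convolution_left _ ψ_smooth.continuous ψ_supp hf).weaken
      (mul_le_of_le_one_left' norm_lsmul_mul_mass_le)
  · rw [h_fderiv]
    exact ⟨_, lipschitzWith_convolution_left _ (ψ_smooth.continuous_fderiv two_ne_zero)
      (ψ_supp.fderiv ℝ) hf⟩
  · refine φ.dist_normed_convolution_le hf.continuous.aestronglyMeasurable fun y hy => ?_
    calc dist (f y) (f x) ≤ K * dist y x := hf.dist_le_mul y x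
      _ ≤ K * δ := by gcongr; exact (Metric.mem_ball.1 hy).le
      _ ≤ ε := K_mul_δ_le

end Smoothing

section GaussianIntegrationByParts

open scoped NNReal

theorem memLp_comp_of_lipschitzWith {Ω E F : Type*} [MeasurableSpace Ω] [NormedAddCommGroup E]
    [NormedAddCommGroup F] {μ : Measure Ω} [IsFiniteMeasure μ] {p : ENNReal} {u : E → F} {K : ℝ≥0}
    {X : Ω → E} (hu : LipschitzWith K u) (hX : MemLp X p μ) :
    MemLp (fun ω => u (X ω)) p μ := by
  have centered : LipschitzWith (K + 0) (fun x => u x - u 0) := hu.sub (.const (u 0))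
  convert (centered.comp_memLp (sub_self (u 0)) hX).add (memLp_const (u 0)) using 2
  simp

theorem integrable_comp_of_lipschitzWith {Ω E F : Type*} [MeasurableSpace Ω]
    [NormedAddCommGroup E] [NormedAddCommGroup F] {μ : Measure Ω} [IsFiniteMeasure μ] {u : E → F}
    {K : ℝ≥0} {X : Ω → E} (hu : LipschitzWith K u) (hX : Integrable X μ) :
    Integrable (fun ω => u (X ω)) μ :=
  memLp_one_iff_integrable.mp (memLp_comp_of_lipschitzWith hu (memLp_one_iff_integrable.mpr hX))

theorem lipschitzWith_cos_smul_add_sin_smul {E : Type*} [NormedAddCommGroup E] [NormedSpace ℝ E]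
    (x y : E) :
    LipschitzWith (‖x‖₊ + ‖y‖₊) fun θ : ℝ => Real.cos θ • x + Real.sin θ • y := by
  have smul_lip : ∀ {φ : ℝ → ℝ}, LipschitzWith 1 φ → ∀ v : E,
      LipschitzWith ‖v‖₊ fun θ => φ θ • v := fun hφ v => by
    simpa [Function.comp_def] using
      ((ContinuousLinearMap.toSpanSingleton ℝ v).lipschitz.comp hφ)
  exact (smul_lip Real.lipschitzWith_cos x).add (smul_lip Real.lipschitzWith_sin y)

variable {E : Type*} [NormedAddCommGroup E] [NormedSpace ℝ E] [CompleteSpace E]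
  [SecondCountableTopology E] [MeasurableSpace E] [BorelSpace E]
  {μ : Measure E} [IsGaussian μ] {u : E → ℝ} {K : ℝ≥0}

-- The rotation `(x, y) ↦ (cos θ x + sin θ y, -sin θ x + cos θ y)` preserves `μ ⊗ μ`.
theorem integral_comp_rotation_mul_dual (hμ : μ[id] = 0) (hu : LipschitzWith K u)
    (L : StrongDual ℝ E) (θ : ℝ) :
    ∫ w, u (Real.cos θ • w.1 + Real.sin θ • w.2) * L w.2 ∂μ.prod μ =
      Real.sin θ * ∫ x, u x * L x ∂μ := by
  have u_memLp : MemLp u 2 μ := memLp_comp_of_lipschitzWith hu (IsGaussian.memLp_two_id (μ := μ))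
  have uL_int : Integrable (fun x => u x * L x) μ :=
    u_memLp.integrable_mul (IsGaussian.memLp_dual μ L 2 (by simp))
  have L_mean : ∫ x, L x ∂μ = 0 := by
    rw [IsGaussian.integral_dual, show ∫ x, x ∂μ = 0 from hμ, map_zero]
  have hu := hu.continuous
  let G : E × E → ℝ := fun w => Real.sin θ * (u w.1 * L w.1) + Real.cos θ * (u w.1 * L w.2)
  have integrand_eq : ∀ w : E × E, u (Real.cos θ • w.1 + Real.sin θ • w.2) * L w.2 =
      G (ContinuousLinearMap.rotation θ w) := fun w => by
    simp only [G, ContinuousLinearMap.rotation_apply, map_add, map_smul, smul_eq_mul]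
    linear_combination (- u (Real.cos θ • w.1 + Real.sin θ • w.2) * L w.2) *
      Real.sin_sq_add_cos_sq θ
  calc ∫ w, u (Real.cos θ • w.1 + Real.sin θ • w.2) * L w.2 ∂μ.prod μ
      = ∫ w, G w ∂(μ.prod μ).map (ContinuousLinearMap.rotation θ) := by
        simp only [integrand_eq]
        exact (integral_map (by fun_prop) (by fun_prop)).symm
    _ = ∫ w, G w ∂μ.prod μ := by rw [IsGaussian.map_rotation_eq_self hμ]
    _ = Real.sin θ * ∫ x, u x * L x ∂μ + Real.cos θ * ((∫ x, u x ∂μ) * ∫ x, L x ∂μ) := by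
        have := (u_memLp.integrable one_le_two).mul_prod (IsGaussian.integrable_dual μ L)
        rw [integral_add ((uL_int.comp_fst μ).const_mul _) (this.const_mul _),
          integral_const_mul, integral_const_mul, integral_prod_mul,
          integral_fun_fst fun x => u x * L x]
        simp
    _ = Real.sin θ * ∫ x, u x * L x ∂μ := by rw [L_mean, mul_zero, mul_zero, add_zero]

theorem integral_mul_dual_eq_integral_fderiv_mul_dual (hμ : μ[id] = 0) (hu : ContDiff ℝ 1 u)
    (hK : LipschitzWith K u) (L : StrongDual ℝ E) :
    ∫ x, u x * L x ∂μ = ∫ w, fderiv ℝ u w.1 w.2 * L w.2 ∂μ.prod μ := by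
  let F : ℝ → E × E → ℝ := fun θ w => u (Real.cos θ • w.1 + Real.sin θ • w.2) * L w.2
  have := hu.continuous_fderiv one_ne_zero
  have hc := hu.continuous
  let bound : E × E → NNReal := fun w => ‖L w.2‖₊ * (K * (‖w.1‖₊ + ‖w.2‖₊))
  have F_lip : ∀ w : E × E, LipschitzWith (bound w) (F · w) := fun w => by
    have := (lipschitzWith_smul (L w.2)).comp
      (hK.comp (lipschitzWith_cos_smul_add_sin_smul w.1 w.2))
    simpa only [F, bound, mul_comm (u _), smul_eq_mul, Function.comp_def] using this
  have F_deriv : ∀ w : E × E, HasDerivAt (F · w) (fderiv ℝ u w.1 w.2 * L w.2) 0 := fun w => by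
    have path : HasDerivAt (fun θ : ℝ => Real.cos θ • w.1 + Real.sin θ • w.2) w.2 0 := by
      simpa using ((Real.hasDerivAt_cos 0).smul_const w.1).fun_add
        ((Real.hasDerivAt_sin 0).smul_const w.2)
    have := (hu.differentiable one_ne_zero (Real.cos 0 • w.1 + Real.sin 0 • w.2)).hasFDerivAt
    simpa [F] using (this.comp_hasDerivAt 0 path).mul_const (L w.2)
  have id_memLp : MemLp id 2 μ := IsGaussian.memLp_two_id
  have L_memLp : MemLp L 2 μ := IsGaussian.memLp_dual μ L 2 (by simp)
  have bound_int : Integrable (fun w => (bound w : ℝ)) (μ.prod μ) := by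
    have cross := (IsGaussian.integrable_id (μ := μ)).norm.mul_prod
      (IsGaussian.integrable_dual μ L).norm
    have diag := (id_memLp.norm.integrable_mul L_memLp.norm).comp_snd μ
    convert (cross.add diag).const_mul (K : ℝ) using 1
    ext w
    simp [bound]
    ring
  have F_int : Integrable (F 0) (μ.prod μ) := by
    simpa [F] using (integrable_comp_of_lipschitzWith hK IsGaussian.integrable_id).mul_prod
      (IsGaussian.integrable_dual μ L)
  have deriv_left := (hasDerivAt_integral_of_dominated_loc_of_lip Filter.univ_mem
    (.of_forall fun θ => by fun_prop) F_int (by fun_prop)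
    (.of_forall fun w => by simpa using F_lip w) bound_int (.of_forall F_deriv)).2
  simp only [F, integral_comp_rotation_mul_dual hμ hK L] at deriv_left
  have deriv_right := (Real.hasDerivAt_sin 0).mul_const (∫ x, u x * L x ∂μ)
  rw [Real.cos_zero, one_mul] at deriv_right
  exact deriv_right.unique deriv_left

end GaussianIntegrationByParts

section StdGaussian

open scoped NNReal RealInnerProductSpace

variable {E : Type*} [NormedAddCommGroup E] [InnerProductSpace ℝ E] [FiniteDimensional ℝ E]
  [MeasurableSpace E] [BorelSpace E]

theorem integral_inner_mul_inner_stdGaussian (v w : E) :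
    ∫ x, ⟪v, x⟫ * ⟪w, x⟫ ∂stdGaussian E = ⟪v, w⟫ := by
  have := covarianceBilin_apply (IsGaussian.memLp_two_id (μ := stdGaussian E)) v w
  simpa [covarianceBilin_stdGaussian, innerSL_apply_apply ℝ] using this.symm

theorem integral_mul_inner_stdGaussian {u : E → ℝ} {K : ℝ≥0} (hu : ContDiff ℝ 1 u)
    (hK : LipschitzWith K u) (v : E) :
    ∫ x, u x * ⟪v, x⟫ ∂stdGaussian E = ∫ x, fderiv ℝ u x v ∂stdGaussian E := by
  have integral_dual_mul_inner : ∀ L : StrongDual ℝ E,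
      ∫ y, L y * ⟪v, y⟫ ∂stdGaussian E = L v := fun L => by
    have := integral_inner_mul_inner_stdGaussian ((InnerProductSpace.toDual ℝ E).symm L) v
    simpa using this
  have integrable_fderiv_mul_inner : Integrable
      (fun w : E × E => fderiv ℝ u w.1 w.2 * ⟪v, w.2⟫) ((stdGaussian E).prod (stdGaussian E)) := by
    have := hu.continuous_fderiv one_ne_zero
    have id_memLp : MemLp id 2 (stdGaussian E) := IsGaussian.memLp_two_id
    refine Integrable.mono' ((id_memLp.norm.integrable_sq.comp_snd _).const_mul (K * ‖v‖))
      (by fun_prop) (.of_forall fun w => ?_)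
    calc ‖fderiv ℝ u w.1 w.2 * ⟪v, w.2⟫‖
        ≤ (K * ‖w.2‖) * (‖v‖ * ‖w.2‖) := by
          rw [norm_mul]
          gcongr
          · exact (fderiv ℝ u w.1).le_of_opNorm_le (norm_fderiv_le_of_lipschitz ℝ hK) _
          · exact norm_inner_le_norm _ _
      _ = K * ‖v‖ * ‖w.2‖ ^ 2 := by ring
  have centered : (stdGaussian E)[id] = 0 := integral_id_stdGaussian
  have by_rotation := integral_mul_dual_eq_integral_fderiv_mul_dual centered hu hK (innerSL ℝ v)
  simp only [innerSL_apply_apply] at by_rotation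
  rw [by_rotation, integral_prod _ integrable_fderiv_mul_inner]
  simp only [integral_dual_mul_inner]

end StdGaussian

theorem integral_le_sqrt_integral_sq {Ω : Type*} [MeasurableSpace Ω] {μ : Measure Ω}
    [IsProbabilityMeasure μ] {X : Ω → ℝ} (hX : MemLp X 2 μ) :
    ∫ ω, X ω ∂μ ≤ √(∫ ω, X ω ^ 2 ∂μ) := by
  have := variance_nonneg X μ
  rw [variance_eq_sub hX] at this
  exact Real.le_sqrt_of_sq_le (by simpa using this)

section FrobeniusNorm

open scoped RealInnerProductSpace

attribute [local instance] Matrix.frobeniusNormedAddCommGroup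

variable {κ : Type*} [Fintype κ]

theorem frobenius_norm_sq_eq_sum (M : Matrix κ κ ℝ) : ‖M‖ ^ 2 = ∑ j, ∑ k, M j k ^ 2 := by
  rw [Matrix.frobenius_norm_def, ← Real.sqrt_eq_rpow, Real.sq_sqrt (by positivity)]
  simp

theorem frobenius_norm_vecMulVec_self (x : EuclideanSpace ℝ κ) :
    ‖vecMulVec x.ofLp x.ofLp‖ = ‖x‖ ^ 2 := by
  rw [← sq_eq_sq₀ (norm_nonneg _) (sq_nonneg _), frobenius_norm_sq_eq_sum,
    EuclideanSpace.real_norm_sq_eq, sq (∑ _, _), Finset.sum_mul_sum]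
  simp only [vecMulVec_apply, mul_pow]

theorem integral_norm_mulVec_stdGaussian_le (M : Matrix κ κ ℝ) :
    ∫ x, ‖WithLp.toLp 2 (M *ᵥ x.ofLp)‖ ∂stdGaussian (EuclideanSpace ℝ κ) ≤ ‖M‖ := by
  let row : κ → EuclideanSpace ℝ κ := fun j => WithLp.toLp 2 (M.row j)
  have id_memLp : MemLp id 2 (stdGaussian (EuclideanSpace ℝ κ)) := IsGaussian.memLp_two_id
  have row_int : ∀ j ∈ Finset.univ, Integrable (fun x => ⟪row j, x⟫ * ⟪row j, x⟫)
      (stdGaussian (EuclideanSpace ℝ κ)) := fun j _ =>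
    (id_memLp.const_inner (row j)).integrable_mul (id_memLp.const_inner (row j))
  have norm_sq_eq : ∀ x : EuclideanSpace ℝ κ,
      ‖WithLp.toLp 2 (M *ᵥ x.ofLp)‖ ^ 2 = ∑ j, ⟪row j, x⟫ * ⟪row j, x⟫ := fun x => by
    rw [EuclideanSpace.real_norm_sq_eq]
    simp [row, PiLp.inner_apply, Matrix.mulVec, dotProduct, sq, mul_comm]
  refine (integral_le_sqrt_integral_sq ?_).trans_eq ?_
  · rw [memLp_two_iff_integrable_sq (by fun_prop)]
    simpa only [norm_sq_eq] using integrable_finsetSum _ row_int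
  rw [← Real.sqrt_sq (norm_nonneg M), frobenius_norm_sq_eq_sum]
  simp only [norm_sq_eq]
  rw [integral_finsetSum _ row_int]
  simp only [integral_inner_mul_inner_stdGaussian, real_inner_self_eq_norm_sq]
  simp [row, EuclideanSpace.real_norm_sq_eq]

variable {S : Type*} [MeasurableSpace S] {μ : Measure S} {M : S → Matrix κ κ ℝ}

theorem integrable_frobenius_norm (hM : ∀ j k, Integrable (fun z => M z j k) μ) :
    Integrable (fun z => ‖M z‖) μ :=
  (Integrable.of_eval_piLp fun j => Integrable.of_eval_piLp fun k => hM j k :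
    Integrable (fun z => WithLp.toLp 2 fun j => WithLp.toLp 2 (M z j)) μ).norm

theorem integrable_mulVec_prod_stdGaussian [SFinite μ]
    (hM : ∀ j k, Integrable (fun z => M z j k) μ) :
    Integrable (fun w => WithLp.toLp 2 (M w.1 *ᵥ w.2.ofLp))
      (μ.prod (stdGaussian (EuclideanSpace ℝ κ))) :=
  .of_eval_piLp fun j => integrable_finsetSum _ fun k _ =>
    (hM j k).mul_prod (IsGaussian.integrable_dual _ (EuclideanSpace.proj k))

theorem integral_norm_mulVec_prod_stdGaussian_le [SFinite μ]
    (hM : ∀ j k, Integrable (fun z => M z j k) μ) :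
    ∫ w, ‖WithLp.toLp 2 (M w.1 *ᵥ w.2.ofLp)‖ ∂μ.prod (stdGaussian (EuclideanSpace ℝ κ)) ≤
      ∫ z, ‖M z‖ ∂μ := by
  have mulVec_int := (integrable_mulVec_prod_stdGaussian hM).norm
  rw [integral_prod _ mulVec_int]
  exact integral_mono mulVec_int.integral_prod_left (integrable_frobenius_norm hM) fun z =>
    integral_norm_mulVec_stdGaussian_le (M z)

end FrobeniusNorm

section SteinKernel

open scoped NNReal RealInnerProductSpace

theorem integrable_fderiv_comp_apply {Ω E : Type*} [MeasurableSpace Ω] [NormedAddCommGroup E]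
    [NormedSpace ℝ E] {ν : Measure Ω} {f : E → ℝ} {K : ℝ≥0} {Y V : Ω → E} (hf : ContDiff ℝ 1 f)
    (hK : LipschitzWith K f) (hY : AEStronglyMeasurable Y ν) (hV : Integrable V ν) :
    Integrable (fun ω => fderiv ℝ f (Y ω) (V ω)) ν :=
  (hV.norm.const_mul K).mono'
    (isBoundedBilinearMap_apply.continuous.comp_aestronglyMeasurable
      (((hf.continuous_fderiv one_ne_zero).comp_aestronglyMeasurable hY).prodMk
        hV.aestronglyMeasurable))
    (.of_forall fun _ =>
      ContinuousLinearMap.le_of_opNorm_le _ (norm_fderiv_le_of_lipschitz ℝ hK) _)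

theorem hasDerivAt_integral_comp_cos_smul_add_sin_smul {Ω E : Type*} [MeasurableSpace Ω]
    [NormedAddCommGroup E] [NormedSpace ℝ E] {ν : Measure Ω} [IsFiniteMeasure ν] {f : E → ℝ}
    {K : ℝ≥0} {U V : Ω → E} (hf : ContDiff ℝ 1 f) (hK : LipschitzWith K f)
    (hU : Integrable U ν) (hV : Integrable V ν) (θ : ℝ) :
    HasDerivAt (fun θ => ∫ ω, f (Real.cos θ • U ω + Real.sin θ • V ω) ∂ν)
      (∫ ω, fderiv ℝ f (Real.cos θ • U ω + Real.sin θ • V ω)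
        (Real.cos θ • V ω - Real.sin θ • U ω) ∂ν) θ := by
  have path_int : ∀ θ, Integrable (fun ω => Real.cos θ • U ω + Real.sin θ • V ω) ν := fun θ =>
    (hU.smul _).add (hV.smul _)
  have velocity_int : Integrable (fun ω => Real.cos θ • V ω - Real.sin θ • U ω) ν :=
    (hV.smul _).sub (hU.smul _)
  refine (hasDerivAt_integral_of_dominated_loc_of_lip (bound := fun ω => K * (‖U ω‖ + ‖V ω‖))
    Filter.univ_mem
    (.of_forall fun θ => hf.continuous.comp_aestronglyMeasurable (path_int θ).aestronglyMeasurable)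
    (integrable_comp_of_lipschitzWith hK (path_int θ))
    (integrable_fderiv_comp_apply hf hK (path_int θ).aestronglyMeasurable
      velocity_int).aestronglyMeasurable
    (.of_forall fun ω => ?_) ((hU.norm.add hV.norm).const_mul _) (.of_forall fun ω => ?_)).2
  · have bound_eq : Real.nnabs (K * (‖U ω‖ + ‖V ω‖)) = K * (‖U ω‖₊ + ‖V ω‖₊) := by
      ext
      simp [add_nonneg]
    rw [bound_eq]
    exact (hK.comp (lipschitzWith_cos_smul_add_sin_smul (U ω) (V ω))).lipschitzOnWith
  · have path : HasDerivAt (fun θ => Real.cos θ • U ω + Real.sin θ • V ω)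
        (Real.cos θ • V ω - Real.sin θ • U ω) θ := by
      convert ((Real.hasDerivAt_cos θ).smul_const (U ω)).fun_add
        ((Real.hasDerivAt_sin θ).smul_const (V ω)) using 1
      module
    exact (hf.differentiable one_ne_zero _).hasFDerivAt.comp_hasDerivAt θ path

theorem dist_integral_comp_le {Ω E : Type*} [MeasurableSpace Ω] [NormedAddCommGroup E]
    {ν : Measure Ω} [IsProbabilityMeasure ν] {f h : E → ℝ} {K L : ℝ≥0} {Y : Ω → E} {ε : ℝ}
    (hf : LipschitzWith K f) (hh : LipschitzWith L h) (hY : Integrable Y ν)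
    (hfh : ∀ x, dist (f x) (h x) ≤ ε) :
    dist (∫ ω, f (Y ω) ∂ν) (∫ ω, h (Y ω) ∂ν) ≤ ε := by
  rw [dist_eq_norm, ← integral_sub (integrable_comp_of_lipschitzWith hf hY)
    (integrable_comp_of_lipschitzWith hh hY)]
  simpa using norm_integral_le_of_norm_le_const (μ := ν)
    (.of_forall fun ω => (dist_eq_norm (f (Y ω)) _).symm.trans_le (hfh (Y ω)))

variable {S κ : Type*} [MeasurableSpace S] [Fintype κ]

/-- `T` is a Stein kernel for the random vector `X`: the function `T` of the sample point plays the
role of the covariance in the Gaussian integration-by-parts formula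
`𝔼[u(X) X_j] = ∑ₖ 𝔼[T_jk ∂ₖu(X)]`, tested against Lipschitz functions `u` of class `C¹`. The sum is
written as the derivative of `u` along the `j`-th row of `T`. -/
def IsSteinKernel (μ : Measure S) (X : S → EuclideanSpace ℝ κ) (T : S → Matrix κ κ ℝ) : Prop :=
  ∀ ⦃u : EuclideanSpace ℝ κ → ℝ⦄ ⦃K : ℝ≥0⦄, ContDiff ℝ 1 u → LipschitzWith K u → ∀ j,
    ∫ z, u (X z) * X z j ∂μ = ∫ z, fderiv ℝ u (X z) (WithLp.toLp 2 (T z j)) ∂μ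

variable {μ : Measure S} {X : S → EuclideanSpace ℝ κ} {T : S → Matrix κ κ ℝ}
  {p : EuclideanSpace ℝ κ → ℝ} {K : ℝ≥0}

theorem IsSteinKernel.integral_comp_add_smul_mul (hXT : IsSteinKernel μ X T)
    (hp : ContDiff ℝ 1 p) (hK : LipschitzWith K p) (a : EuclideanSpace ℝ κ) (s : ℝ) (j : κ) :
    ∫ z, p (a + s • X z) * X z j ∂μ =
      s * ∫ z, fderiv ℝ p (a + s • X z) (WithLp.toLp 2 (T z j)) ∂μ := by
  rw [hXT (u := fun x => p (a + s • x)) (by fun_prop)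
    (hK.comp ((LipschitzWith.const a).add (lipschitzWith_smul s))) j, ← integral_const_mul]
  simp [fderiv_comp_smul (f := fun x => p (a + x)), fderiv_comp_add_left]

theorem integral_comp_add_smul_mul_mulVec_stdGaussian (hp : ContDiff ℝ 1 p)
    (hK : LipschitzWith K p) (a : EuclideanSpace ℝ κ) (c : ℝ) (M : Matrix κ κ ℝ) (j : κ) :
    ∫ x, p (a + c • x) * (M *ᵥ x.ofLp) j ∂stdGaussian (EuclideanSpace ℝ κ) =
      c * ∫ x, fderiv ℝ p (a + c • x) (WithLp.toLp 2 (M j))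
        ∂stdGaussian (EuclideanSpace ℝ κ) := by
  have := integral_mul_inner_stdGaussian (u := fun x => p (a + c • x)) (by fun_prop)
    (hK.comp ((LipschitzWith.const a).add (lipschitzWith_smul c))) (WithLp.toLp 2 (M j))
  rw [← integral_const_mul]
  simpa [fderiv_comp_smul (f := fun x => p (a + x)), fderiv_comp_add_left, PiLp.inner_apply,
    Matrix.mulVec, dotProduct, mul_comm] using this

local notation "γ" => stdGaussian (EuclideanSpace ℝ κ)

theorem aestronglyMeasurable_smul_add_smul (hX : Integrable X μ) (c s : ℝ) :
    AEStronglyMeasurable (fun w => c • w.2 + s • X w.1) (μ.prod γ) :=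
  (by fun_prop : AEStronglyMeasurable _ _).add (hX.aestronglyMeasurable.comp_fst.const_smul s)

variable [IsProbabilityMeasure μ]

-- Both sides are `c * s * ∑ₖ 𝔼[T_jk ∂ₖp(c g + s X)]`: integrate by parts in `X` and in `g`.
theorem IsSteinKernel.integral_comp_smul_add_smul_mul (hXT : IsSteinKernel μ X T)
    (hX : Integrable X μ) (hT : ∀ j k, Integrable (fun z => T z j k) μ) (hp : ContDiff ℝ 1 p)
    (hK : LipschitzWith K p) {C : ℝ} (hC : ∀ x, ‖p x‖ ≤ C) (c s : ℝ) (j : κ) :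
    c * ∫ w, p (c • w.2 + s • X w.1) * X w.1 j ∂μ.prod γ =
      s * ∫ w, p (c • w.2 + s • X w.1) * (T w.1 *ᵥ w.2.ofLp) j ∂μ.prod γ := by
  have Y_meas := aestronglyMeasurable_smul_add_smul hX c s
  have bdd_mul : ∀ {h : S × EuclideanSpace ℝ κ → ℝ}, Integrable h (μ.prod γ) →
      Integrable (fun w => p (c • w.2 + s • X w.1) * h w) (μ.prod γ) := fun hh =>
    hh.bdd_mul (hp.continuous.comp_aestronglyMeasurable Y_meas) (.of_forall fun w => hC _)
  have X_int : Integrable (fun w => p (c • w.2 + s • X w.1) * X w.1 j) (μ.prod γ) :=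
    bdd_mul ((hX.eval_piLp j).comp_fst γ)
  have Tg_int := bdd_mul ((integrable_mulVec_prod_stdGaussian hT).eval_piLp j)
  have row_int : Integrable (fun z => WithLp.toLp 2 (T z j)) μ := .of_eval_piLp (hT j)
  have fderiv_int : Integrable (fun w => fderiv ℝ p (c • w.2 + s • X w.1)
      (WithLp.toLp 2 (T w.1 j))) (μ.prod γ) :=
    integrable_fderiv_comp_apply hp hK Y_meas (row_int.comp_fst γ)
  have by_parts_X : ∫ w, p (c • w.2 + s • X w.1) * X w.1 j ∂μ.prod γ =
      s * ∫ w, fderiv ℝ p (c • w.2 + s • X w.1) (WithLp.toLp 2 (T w.1 j)) ∂μ.prod γ := by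
    rw [integral_prod_symm _ X_int, integral_prod_symm _ fderiv_int, ← integral_const_mul]
    simp only [hXT.integral_comp_add_smul_mul hp hK]
  have by_parts_g : ∫ w, p (c • w.2 + s • X w.1) * (T w.1 *ᵥ w.2.ofLp) j ∂μ.prod γ =
      c * ∫ w, fderiv ℝ p (c • w.2 + s • X w.1) (WithLp.toLp 2 (T w.1 j)) ∂μ.prod γ := by
    rw [integral_prod _ Tg_int, integral_prod _ fderiv_int, ← integral_const_mul]
    simp only [add_comm (c • _), integral_comp_add_smul_mul_mulVec_stdGaussian hp hK]
  rw [by_parts_X, by_parts_g]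
  ring

variable {f : EuclideanSpace ℝ κ → ℝ} {L : ℝ≥0} [DecidableEq κ]

theorem fderiv_apply_eq_sum_single (x v : EuclideanSpace ℝ κ) :
    fderiv ℝ f x v = ∑ j, fderiv ℝ f x (EuclideanSpace.single j 1) * v j := by
  conv_lhs => rw [← (EuclideanSpace.basisFun κ ℝ).sum_repr v]
  simp [mul_comm]

theorem IsSteinKernel.integral_fderiv_smul_add_smul (hXT : IsSteinKernel μ X T)
    (hX : Integrable X μ) (hT : ∀ j k, Integrable (fun z => T z j k) μ) (hf : ContDiff ℝ 2 f)
    (hK : LipschitzWith K f) (hL : LipschitzWith L (fderiv ℝ f)) (c s : ℝ) :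
    ∫ w, fderiv ℝ f (c • w.2 + s • X w.1) (c • X w.1 - s • w.2) ∂μ.prod γ =
      s * ∫ w, fderiv ℝ f (c • w.2 + s • X w.1)
        (WithLp.toLp 2 ((T w.1 - 1) *ᵥ w.2.ofLp)) ∂μ.prod γ := by
  have Y_meas := aestronglyMeasurable_smul_add_smul hX c s
  have fderiv_int : ∀ {V : S × EuclideanSpace ℝ κ → EuclideanSpace ℝ κ},
      Integrable V (μ.prod γ) →
      Integrable (fun w => fderiv ℝ f (c • w.2 + s • X w.1) (V w)) (μ.prod γ) :=
    integrable_fderiv_comp_apply (hf.of_le one_le_two) hK Y_meas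
  have Tg_int := integrable_mulVec_prod_stdGaussian hT
  have g_int : Integrable (fun w => w.2) (μ.prod γ) :=
    IsGaussian.integrable_id.comp_snd μ
  have partial_int : ∀ {V : S × EuclideanSpace ℝ κ → EuclideanSpace ℝ κ},
      Integrable V (μ.prod γ) → ∀ j, Integrable (fun w =>
        fderiv ℝ f (c • w.2 + s • X w.1) (EuclideanSpace.single j 1) * V w j) (μ.prod γ) :=
    fun hV j => by
      simpa [mul_comm] using
        fderiv_int ((hV.eval_piLp j).smul_const (EuclideanSpace.single j 1))
  have by_parts : c * ∫ w, fderiv ℝ f (c • w.2 + s • X w.1) (X w.1) ∂μ.prod γ =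
      s * ∫ w, fderiv ℝ f (c • w.2 + s • X w.1)
        (WithLp.toLp 2 (T w.1 *ᵥ w.2.ofLp)) ∂μ.prod γ := by
    simp only [fderiv_apply_eq_sum_single _ (X _),
      fderiv_apply_eq_sum_single _ (WithLp.toLp 2 (T _ *ᵥ _))]
    rw [integral_finsetSum _ fun j _ => partial_int (hX.comp_fst γ) j,
      integral_finsetSum _ fun j _ => partial_int Tg_int j, Finset.mul_sum, Finset.mul_sum]
    refine Finset.sum_congr rfl fun j _ => ?_
    exact hXT.integral_comp_smul_add_smul_mul hX hT
      ((hf.fderiv_right (m := 1) le_rfl).clm_apply contDiff_const)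
      ((ContinuousLinearMap.apply ℝ ℝ (EuclideanSpace.single j (1 : ℝ))).lipschitz.comp hL)
      (fun x => ContinuousLinearMap.le_of_opNorm_le _ (norm_fderiv_le_of_lipschitz ℝ hK) _) c s j
  simp only [map_sub, map_smul, smul_eq_mul, Matrix.sub_mulVec, Matrix.one_mulVec, WithLp.toLp_sub,
    WithLp.toLp_ofLp]
  rw [integral_sub ((fderiv_int (hX.comp_fst γ)).const_mul c) ((fderiv_int g_int).const_mul s),
    integral_sub (fderiv_int Tg_int) (fderiv_int g_int), integral_const_mul, integral_const_mul,
    by_parts, mul_sub]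

attribute [local instance] Matrix.frobeniusNormedAddCommGroup

theorem IsSteinKernel.norm_integral_fderiv_smul_add_smul_le (hXT : IsSteinKernel μ X T)
    (hX : Integrable X μ) (hT : ∀ j k, Integrable (fun z => T z j k) μ) (hf : ContDiff ℝ 2 f)
    (hK : LipschitzWith K f) (hL : LipschitzWith L (fderiv ℝ f)) (c : ℝ) {s : ℝ} (hs : 0 ≤ s) :
    ‖∫ w, fderiv ℝ f (c • w.2 + s • X w.1) (c • X w.1 - s • w.2) ∂μ.prod γ‖ ≤
      s * (K * ∫ z, ‖T z - 1‖ ∂μ) := by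
  have sub_one_int : ∀ j k, Integrable (fun z => (T z - 1) j k) μ := fun j k =>
    (hT j k).sub (integrable_const _)
  rw [hXT.integral_fderiv_smul_add_smul hX hT hf hK hL, norm_mul, Real.norm_of_nonneg hs]
  gcongr
  calc ‖∫ w, fderiv ℝ f (c • w.2 + s • X w.1)
          (WithLp.toLp 2 ((T w.1 - 1) *ᵥ w.2.ofLp)) ∂μ.prod γ‖
      ≤ ∫ w, K * ‖WithLp.toLp 2 ((T w.1 - 1) *ᵥ w.2.ofLp)‖ ∂μ.prod γ :=
        norm_integral_le_of_norm_le
          ((integrable_mulVec_prod_stdGaussian sub_one_int).norm.const_mul _)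
          (.of_forall fun w =>
            ContinuousLinearMap.le_of_opNorm_le _ (norm_fderiv_le_of_lipschitz ℝ hK) _)
    _ ≤ K * ∫ z, ‖T z - 1‖ ∂μ := by
        rw [integral_const_mul]
        gcongr
        exact integral_norm_mulVec_prod_stdGaussian_le (M := fun z => T z - 1) sub_one_int

-- Differentiate `θ ↦ 𝔼[f(cos θ g + sin θ X)]`, which joins `𝔼[f(g)]` to `𝔼[f(X)]` on `[0, π / 2]`.
theorem IsSteinKernel.norm_integral_comp_sub_integral_stdGaussian_le_of_contDiff
    (hXT : IsSteinKernel μ X T) (hX : Integrable X μ)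
    (hT : ∀ j k, Integrable (fun z => T z j k) μ) (hf : ContDiff ℝ 2 f)
    (hK : LipschitzWith K f) (hL : LipschitzWith L (fderiv ℝ f)) :
    ‖∫ z, f (X z) ∂μ - ∫ x, f x ∂γ‖ ≤ K * ∫ z, ‖T z - 1‖ ∂μ := by
  let φ : ℝ → ℝ := fun θ => ∫ w, f (Real.cos θ • w.2 + Real.sin θ • X w.1) ∂μ.prod γ
  let B : ℝ → ℝ := fun θ => (1 - Real.cos θ) * (K * ∫ z, ‖T z - 1‖ ∂μ)
  have φ_deriv := hasDerivAt_integral_comp_cos_smul_add_sin_smul (hf.of_le one_le_two) hK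
    (IsGaussian.integrable_id.comp_snd μ)
    (hX.comp_fst γ)
  have B_deriv : ∀ θ, HasDerivAt B (Real.sin θ * (K * ∫ z, ‖T z - 1‖ ∂μ)) θ := fun θ => by
    simpa using ((Real.hasDerivAt_cos θ).const_sub 1).mul_const (K * ∫ z, ‖T z - 1‖ ∂μ)
  have interpolation : ‖φ (Real.pi / 2) - φ 0‖ ≤ B (Real.pi / 2) :=
    image_norm_le_of_norm_deriv_right_le_deriv_boundary (f := fun θ => φ θ - φ 0)
      (fun θ _ => ((φ_deriv θ).sub_const _).continuousAt.continuousWithinAt)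
      (fun θ _ => ((φ_deriv θ).sub_const _).hasDerivWithinAt) (by simp [B]) B_deriv
      (fun θ hθ => hXT.norm_integral_fderiv_smul_add_smul_le hX hT hf hK hL _
        (Real.sin_nonneg_of_nonneg_of_le_pi hθ.1 (by linarith [hθ.2, Real.pi_pos])))
      (Set.right_mem_Icc.mpr (by positivity))
  simpa [φ, B, integral_fun_fst (fun z => f (X z)), integral_fun_snd f] using interpolation

theorem IsSteinKernel.norm_integral_comp_sub_integral_stdGaussian_le (hXT : IsSteinKernel μ X T)
    (hX : Integrable X μ) (hT : ∀ j k, Integrable (fun z => T z j k) μ)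
    (hK : LipschitzWith K f) :
    ‖∫ z, f (X z) ∂μ - ∫ x, f x ∂γ‖ ≤ K * ∫ z, ‖T z - 1‖ ∂μ := by
  refine le_of_forall_pos_le_add fun ε hε => ?_
  obtain ⟨h, h_contDiff, h_lip, ⟨L, h_fderiv_lip⟩, h_dist⟩ :=
    exists_contDiff_lipschitzWith_dist_le hK (half_pos hε)
  have smooth := hXT.norm_integral_comp_sub_integral_stdGaussian_le_of_contDiff hX hT h_contDiff
    h_lip h_fderiv_lip
  have approx_X := dist_integral_comp_le hK h_lip hX fun x => (dist_comm _ _).trans_le (h_dist x)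
  have approx_g := dist_integral_comp_le h_lip hK (IsGaussian.integrable_id (μ := γ)) h_dist
  rw [← dist_eq_norm] at smooth ⊢
  linarith [dist_triangle4 (∫ z, f (X z) ∂μ) (∫ z, h (X z) ∂μ) (∫ x, h x ∂γ) (∫ x, f x ∂γ),
    show dist (∫ x, h x ∂γ) (∫ x, f x ∂γ) ≤ ε / 2 from approx_g]

end SteinKernel

section QuadraticForm

variable {ι : Type*} [Fintype ι]

/-- The quadratic form `⟨M z, z⟩` of a complex matrix `M`, as a linear function of `M`. -/
def quadForm (z : ι → ℂ) : Matrix ι ι ℂ →ₗ[ℂ] ℂ where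
  toFun M := star z ⬝ᵥ (M *ᵥ z)
  map_add' M N := by rw [add_mulVec, dotProduct_add]
  map_smul' c M := by rw [smul_mulVec, dotProduct_smul, RingHom.id_apply]

theorem quadForm_apply (z : ι → ℂ) (M : Matrix ι ι ℂ) : quadForm z M = star z ⬝ᵥ (M *ᵥ z) := rfl

theorem quadForm_mulVec (V M : Matrix ι ι ℂ) (z : ι → ℂ) :
    quadForm (V *ᵥ z) M = quadForm z (Vᴴ * M * V) := by
  simp only [quadForm_apply, star_mulVec, ← mulVec_mulVec, dotProduct_mulVec]

theorem quadForm_conjTranspose (z : ι → ℂ) (M : Matrix ι ι ℂ) :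
    quadForm z Mᴴ = star (quadForm z M) := by
  rw [quadForm_apply, quadForm_apply, ← star_dotProduct, star_mulVec, ← dotProduct_mulVec]

theorem ofReal_re_quadForm {M : Matrix ι ι ℂ} (hM : M.IsHermitian) (z : ι → ℂ) :
    ((quadForm z M).re : ℂ) = quadForm z M :=
  Complex.conj_eq_iff_re.mp <| by
    rw [← Complex.star_def, ← quadForm_conjTranspose, hM.eq]

theorem quadForm_lie_smul_add_smul (z : ι → ℂ) (c d : ℂ) (M N L : Matrix ι ι ℂ) :
    quadForm z ⁅c • M + d • N, L⁆ = c * quadForm z ⁅M, L⁆ + d * quadForm z ⁅N, L⁆ := by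
  simp only [Ring.lie_def, add_mul, mul_add, smul_mul_assoc, mul_smul_comm, map_sub, map_add,
    map_smul, smul_eq_mul]
  ring

theorem continuous_quadForm {G : (ι → ℂ) → Matrix ι ι ℂ} (hG : Continuous G) :
    Continuous fun z => quadForm z (G z) := by
  simp only [quadForm_apply]
  fun_prop

variable [DecidableEq ι]

theorem quadForm_mulVec_one {V : Matrix ι ι ℂ} (hV : V ∈ unitaryGroup ι ℂ) (z : ι → ℂ) :
    quadForm (V *ᵥ z) 1 = quadForm z 1 := by
  rw [quadForm_mulVec, mul_one, ← star_eq_conjTranspose, mem_unitaryGroup_iff'.mp hV]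

theorem isCompact_quadForm_one_eq_one : IsCompact {z : ι → ℂ | quadForm z 1 = 1} := by
  refine Metric.isCompact_of_isClosed_isBounded
    (isClosed_eq (continuous_quadForm continuous_const) continuous_const)
    (Metric.isBounded_closedBall (x := 0) (r := 1) |>.subset fun z hz => ?_)
  have sum_norm_sq : ∑ j, ‖z j‖ ^ 2 = 1 := by
    have : ((∑ j, ‖z j‖ ^ 2 : ℝ) : ℂ) = 1 := by
      simpa [quadForm_apply, dotProduct, Complex.conj_mul'] using hz
    exact_mod_cast this
  rw [mem_closedBall_zero_iff, pi_norm_le_iff_of_nonneg zero_le_one]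
  intro i
  rw [← sq_le_one_iff₀ (norm_nonneg _), ← sum_norm_sq]
  exact Finset.single_le_sum (f := fun j => ‖z j‖ ^ 2) (fun j _ => sq_nonneg _)
    (Finset.mem_univ i)

end QuadraticForm

section UnitaryOrbits

variable {ι : Type*} [Fintype ι] [DecidableEq ι]

/-- The uniform distribution on the unit sphere of `ℂ^ι`, characterised by its support and its
invariance under the unitary group. -/
structure IsUniformOnSphere (μ : Measure (ι → ℂ)) : Prop where
  ae_quadForm_one : ∀ᵐ z ∂μ, quadForm z 1 = 1
  map_mulVec : ∀ V ∈ unitaryGroup ι ℂ, μ.map (V *ᵥ ·) = μ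

/-- `G z` represents the derivative of `Φ` at `z` along the orbit of the unitary group: moving `z`
in the direction `L z`, with `L` skew-Hermitian, changes `Φ` at rate `⟨[G z, L] z, z⟩`. -/
def HasOrbitGradient (Φ : (ι → ℂ) → ℂ) (G : (ι → ℂ) → Matrix ι ι ℂ) : Prop :=
  ∀ ⦃L : Matrix ι ι ℂ⦄, L ∈ skewAdjoint (Matrix ι ι ℂ) → ∀ z,
    HasDerivAt (fun t : ℝ => Φ (NormedSpace.exp (t • L) *ᵥ z)) (quadForm z ⁅G z, L⁆) 0

theorem exp_smul_mem_unitaryGroup {L : Matrix ι ι ℂ} (hL : L ∈ skewAdjoint (Matrix ι ι ℂ))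
    (t : ℝ) : NormedSpace.exp (t • L) ∈ unitaryGroup ι ℂ := by
  rw [mem_unitaryGroup_iff, star_eq_conjTranspose, ← Matrix.exp_conjTranspose, conjTranspose_smul,
    ← star_eq_conjTranspose, skewAdjoint.mem_iff.mp hL, star_trivial, smul_neg, Matrix.exp_neg,
    Matrix.mul_nonsing_inv]
  exact (Matrix.isUnit_iff_isUnit_det _).mp (Matrix.isUnit_exp _)

theorem hasOrbitGradient_const (c : ℂ) : HasOrbitGradient (fun _ : ι → ℂ => c) fun _ => 0 :=
  fun L _ z => by simpa [Ring.lie_def] using hasDerivAt_const (0 : ℝ) c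

theorem hasOrbitGradient_quadForm (M : Matrix ι ι ℂ) :
    HasOrbitGradient (fun z => quadForm z M) fun _ => M := fun L hL z => by
  open scoped Matrix.Norms.Operator in
  have conj_eq (t : ℝ) : quadForm (NormedSpace.exp (t • L) *ᵥ z) M =
      quadForm z (NormedSpace.exp (t • -L) * M * NormedSpace.exp (t • L)) := by
    rw [quadForm_mulVec, ← Matrix.exp_conjTranspose, conjTranspose_smul, ← star_eq_conjTranspose,
      skewAdjoint.mem_iff.mp hL, star_trivial]
  have conj_deriv : HasDerivAt
      (fun t : ℝ => NormedSpace.exp (t • -L) * M * NormedSpace.exp (t • L)) ⁅M, L⁆ 0 := by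
    refine (((hasDerivAt_exp_smul_const (𝕂 := ℝ) (-L) 0).mul_const M).mul
      (hasDerivAt_exp_smul_const (𝕂 := ℝ) L 0)).congr_deriv ?_
    simp [Ring.lie_def, sub_eq_neg_add]
  simp only [conj_eq]
  exact ((quadForm z).restrictScalars ℝ).toContinuousLinearMap.hasFDerivAt.comp_hasDerivAt 0
    conj_deriv

variable {Φ Ψ : (ι → ℂ) → ℂ} {G F : (ι → ℂ) → Matrix ι ι ℂ}

theorem HasOrbitGradient.mul (hΦ : HasOrbitGradient Φ G) (hΨ : HasOrbitGradient Ψ F) :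
    HasOrbitGradient (fun z => Φ z * Ψ z) fun z => Ψ z • G z + Φ z • F z := fun L hL z => by
  refine ((hΦ hL z).fun_mul (hΨ hL z)).congr_deriv ?_
  rw [quadForm_lie_smul_add_smul, zero_smul, NormedSpace.exp_zero, one_mulVec]
  ring

theorem HasOrbitGradient.hasDerivAt (hΦ : HasOrbitGradient Φ G) {L : Matrix ι ι ℂ}
    (hL : L ∈ skewAdjoint (Matrix ι ι ℂ)) (z : ι → ℂ) (t : ℝ) :
    HasDerivAt (fun t : ℝ => Φ (NormedSpace.exp (t • L) *ᵥ z))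
      (quadForm (NormedSpace.exp (t • L) *ᵥ z) ⁅G (NormedSpace.exp (t • L) *ᵥ z), L⁆) t := by
  have exp_add (r : ℝ) : NormedSpace.exp ((r - t) • L) * NormedSpace.exp (t • L) =
      NormedSpace.exp (r • L) := by
    rw [← Matrix.exp_add_of_commute _ _ (((Commute.refl L).smul_left _).smul_right _), ← add_smul,
      sub_add_cancel]
  have shifted := (hΦ hL (NormedSpace.exp (t • L) *ᵥ z)).scomp_of_eq t
    ((hasDerivAt_id t).sub_const t) (sub_self t).symm
  simpa [Function.comp_def, mulVec_mulVec, exp_add] using shifted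

variable {μ : Measure (ι → ℂ)} [IsProbabilityMeasure μ]

theorem IsUniformOnSphere.integrable (hμ : IsUniformOnSphere μ) {E : Type*} [NormedAddCommGroup E]
    [SecondCountableTopology E] {h : (ι → ℂ) → E} (hh : Continuous h) : Integrable h μ := by
  obtain ⟨C, hC⟩ := isCompact_quadForm_one_eq_one.exists_bound_of_continuousOn hh.continuousOn
  exact .of_bound hh.aestronglyMeasurable C (hμ.ae_quadForm_one.mono hC)

theorem IsUniformOnSphere.integral_quadForm_lie_of_mem_skewAdjoint (hμ : IsUniformOnSphere μ)
    (hΦ : HasOrbitGradient Φ G) (hΦc : Continuous Φ) (hG : Continuous G) {L : Matrix ι ι ℂ}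
    (hL : L ∈ skewAdjoint (Matrix ι ι ℂ)) : ∫ z, quadForm z ⁅G z, L⁆ ∂μ = 0 := by
  have lie_cont : Continuous fun z => quadForm z ⁅G z, L⁆ := by
    simp only [Ring.lie_def]
    exact continuous_quadForm (by fun_prop)
  obtain ⟨C, hC⟩ := isCompact_quadForm_one_eq_one.exists_bound_of_continuousOn lie_cont.continuousOn
  have mulVec_cont (V : Matrix ι ι ℂ) : Continuous fun z : ι → ℂ => V *ᵥ z := by fun_prop
  have deriv_integral := (hasDerivAt_integral_of_dominated_loc_of_deriv_le (μ := μ)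
    (F := fun (t : ℝ) z => Φ (NormedSpace.exp (t • L) *ᵥ z)) (x₀ := 0) (bound := fun _ => C)
    Filter.univ_mem (.of_forall fun t => (hΦc.comp (mulVec_cont _)).aestronglyMeasurable)
    (hμ.integrable (hΦc.comp (mulVec_cont _)))
    (lie_cont.comp (mulVec_cont _)).aestronglyMeasurable
    (hμ.ae_quadForm_one.mono fun z hz t _ =>
      hC _ ((quadForm_mulVec_one (exp_smul_mem_unitaryGroup hL t) z).trans hz))
    (integrable_const C) (.of_forall fun z t _ => hΦ.hasDerivAt hL z t)).2
  have invariance (t : ℝ) : ∫ z, Φ (NormedSpace.exp (t • L) *ᵥ z) ∂μ = ∫ z, Φ z ∂μ := by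
    conv_rhs => rw [← hμ.map_mulVec _ (exp_smul_mem_unitaryGroup hL t)]
    rw [integral_map (by fun_prop) hΦc.aestronglyMeasurable]
  simp only [invariance] at deriv_integral
  simpa using deriv_integral.unique (hasDerivAt_const _ _)

theorem IsUniformOnSphere.integral_quadForm_lie (hμ : IsUniformOnSphere μ)
    (hΦ : HasOrbitGradient Φ G) (hΦc : Continuous Φ) (hG : Continuous G) (L : Matrix ι ι ℂ) :
    ∫ z, quadForm z ⁅G z, L⁆ ∂μ = 0 := by
  have lie_integrable (L : Matrix ι ι ℂ) : Integrable (fun z => quadForm z ⁅G z, L⁆) μ := by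
    simp only [Ring.lie_def]
    exact hμ.integrable (continuous_quadForm (by fun_prop))
  have skew_real_part : ∫ z, quadForm z ⁅G z, Complex.I • (realPart L : Matrix ι ι ℂ)⁆ ∂μ = 0 :=
    hμ.integral_quadForm_lie_of_mem_skewAdjoint hΦ hΦc hG
      ((realPart L).2.I_smul_mem_skewAdjoint)
  have skew_imaginary_part :
      ∫ z, quadForm z ⁅G z, Complex.I • (imaginaryPart L : Matrix ι ι ℂ)⁆ ∂μ = 0 :=
    hμ.integral_quadForm_lie_of_mem_skewAdjoint hΦ hΦc hG
      ((imaginaryPart L).2.I_smul_mem_skewAdjoint)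
  have lie_eq (z : ι → ℂ) : quadForm z ⁅G z, L⁆ =
      -Complex.I * quadForm z ⁅G z, Complex.I • (realPart L : Matrix ι ι ℂ)⁆ +
        quadForm z ⁅G z, Complex.I • (imaginaryPart L : Matrix ι ι ℂ)⁆ := by
    conv_lhs => rw [← realPart_add_I_smul_imaginaryPart L]
    simp only [Ring.lie_def, add_mul, mul_add, smul_mul_assoc, mul_smul_comm, map_sub, map_add,
      map_smul, smul_eq_mul]
    linear_combination (quadForm z (G z * realPart L) - quadForm z (realPart L * G z)) *
      Complex.I_mul_I
  simp only [lie_eq]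
  rw [integral_add ((lie_integrable _).const_mul _) (lie_integrable _), integral_const_mul,
    skew_real_part, skew_imaginary_part, mul_zero, add_zero]

end UnitaryOrbits

section SphericalStein

theorem sum_lie_single_lie_single {R ι : Type*} [CommRing R] [Fintype ι] [DecidableEq ι]
    (M : Matrix ι ι R) :
    ∑ a, ∑ b, ⁅⁅M, single b a (1 : R)⁆, single a b (1 : R)⁆ =
      (2 * Fintype.card ι : R) • M - (2 * M.trace) • (1 : Matrix ι ι R) := by
  have expand (a b : ι) : ⁅⁅M, single b a (1 : R)⁆, single a b (1 : R)⁆ =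
      M * single b b 1 - M a a • single b b 1 - M b b • single a a 1 + single a a 1 * M := by
    simp only [Ring.lie_def, sub_mul, mul_sub, ← mul_assoc, single_mul_single_same,
      single_mul_mul_single, smul_single, smul_eq_mul, mul_one, one_mul]
    rw [mul_assoc M, single_mul_single_same, mul_one]
    abel
  simp only [expand, Finset.sum_add_distrib, Finset.sum_sub_distrib, ← Finset.mul_sum,
    ← Finset.sum_mul, ← Finset.smul_sum, ← Finset.sum_smul, sum_single_one, mul_one, one_mul,
    Finset.sum_const, Finset.card_univ, ← Nat.cast_smul_eq_nsmul R, trace, diag_apply]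
  module

variable {ι : Type*} [Fintype ι] [DecidableEq ι]

theorem quadForm_mul_single (z : ι → ℂ) (M : Matrix ι ι ℂ) (a b : ι) :
    quadForm z (M * single a b 1) = (star z ᵥ* M) a * z b := by
  simp [quadForm_apply, ← mulVec_mulVec, dotProduct_mulVec, single_mulVec_eq, mul_comm]

theorem quadForm_single_mul (z : ι → ℂ) (M : Matrix ι ι ℂ) (a b : ι) :
    quadForm z (single a b 1 * M) = star (z a) * (M *ᵥ z) b := by
  simp [quadForm_apply, ← mulVec_mulVec, single_mulVec_eq, mul_comm]

theorem sum_quadForm_lie_single_mul (z : ι → ℂ) (G M : Matrix ι ι ℂ) :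
    ∑ a, ∑ b, quadForm z ⁅G, single a b 1⁆ * quadForm z ⁅M, single b a 1⁆ =
      2 * (quadForm z G * quadForm z M) - quadForm z 1 * (quadForm z (G * M + M * G)) := by
  have vecMul_sum (L : Matrix ι ι ℂ) : quadForm z L = ∑ a, (star z ᵥ* L) a * z a :=
    dotProduct_mulVec _ _ _
  have mulVec_sum (L : Matrix ι ι ℂ) : quadForm z L = ∑ a, star (z a) * (L *ᵥ z) a := rfl
  have mul_sum (L N : Matrix ι ι ℂ) :
      quadForm z (L * N) = ∑ a, (star z ᵥ* L) a * (N *ᵥ z) a := by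
    rw [quadForm_apply, ← mulVec_mulVec, dotProduct_mulVec]
    rfl
  have expand (a b : ι) : quadForm z ⁅G, single a b 1⁆ * quadForm z ⁅M, single b a 1⁆ =
      ((star z ᵥ* G) a * z a) * ((star z ᵥ* M) b * z b) +
        (star (z a) * (M *ᵥ z) a) * (star (z b) * (G *ᵥ z) b) -
        ((star z ᵥ* G) a * (M *ᵥ z) a) * (star (z b) * z b) -
        (star (z a) * z a) * ((star z ᵥ* M) b * (G *ᵥ z) b) := by
    simp only [Ring.lie_def, map_sub, quadForm_mul_single, quadForm_single_mul]
    ring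
  simp only [expand, Finset.sum_sub_distrib, Finset.sum_add_distrib, ← Finset.sum_mul_sum]
  simp only [← vecMul_sum, ← mulVec_sum, ← mul_sum, map_add]
  rw [mulVec_sum 1, one_mulVec]
  ring

theorem sum_quadForm_lie_smul_add_smul_lie_single {z : ι → ℂ} (hz : quadForm z 1 = 1) (c : ℂ)
    (G M : Matrix ι ι ℂ) :
    ∑ a, ∑ b, quadForm z ⁅quadForm z ⁅M, single b a (1 : ℂ)⁆ • G +
        c • ⁅M, single b a (1 : ℂ)⁆, single a b (1 : ℂ)⁆ =
      2 * (c * (Fintype.card ι * quadForm z M - M.trace) -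
        (quadForm z (G * M + M * G) / 2 - quadForm z G * quadForm z M)) := by
  simp only [quadForm_lie_smul_add_smul, mul_comm (quadForm z ⁅M, _⁆), Finset.sum_add_distrib,
    ← Finset.mul_sum, ← map_sum, sum_lie_single_lie_single]
  rw [sum_quadForm_lie_single_mul, hz, map_sub, map_smul, map_smul, hz, smul_eq_mul, smul_eq_mul]
  ring

variable {μ : Measure (ι → ℂ)} [IsProbabilityMeasure μ] {Φ : (ι → ℂ) → ℂ}
  {G : (ι → ℂ) → Matrix ι ι ℂ}

-- The Casimir sum `∑ₐᵦ [[M, Eᵦₐ], Eₐᵦ]` turns the vanishing of the orbit derivatives of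
-- `z ↦ Φ z * ⟨[M, Eᵦₐ] z, z⟩` into an integration-by-parts formula.
theorem IsUniformOnSphere.integral_mul_quadForm_sub_trace (hμ : IsUniformOnSphere μ)
    (hΦ : HasOrbitGradient Φ G) (hΦc : Continuous Φ) (hG : Continuous G) (M : Matrix ι ι ℂ) :
    ∫ z, Φ z * (Fintype.card ι * quadForm z M - M.trace) ∂μ =
      ∫ z, (quadForm z (G z * M + M * G z) / 2 - quadForm z (G z) * quadForm z M) ∂μ := by
  have quad_cont (L : Matrix ι ι ℂ) : Continuous fun z => quadForm z L :=
    continuous_quadForm continuous_const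
  let Γ (a b : ι) (z : ι → ℂ) : Matrix ι ι ℂ :=
    quadForm z ⁅M, single b a (1 : ℂ)⁆ • G z + Φ z • ⁅M, single b a (1 : ℂ)⁆
  have Γ_cont (a b : ι) : Continuous (Γ a b) :=
    ((quad_cont _).smul hG).add (hΦc.smul continuous_const)
  have Γ_int (a b : ι) : Integrable (fun z => quadForm z ⁅Γ a b z, single a b (1 : ℂ)⁆) μ := by
    simp only [Ring.lie_def]
    exact hμ.integrable (continuous_quadForm (by fun_prop))
  have derivative_zero (a b : ι) : ∫ z, quadForm z ⁅Γ a b z, single a b (1 : ℂ)⁆ ∂μ = 0 :=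
    hμ.integral_quadForm_lie (hΦ.mul (hasOrbitGradient_quadForm ⁅M, single b a 1⁆))
      (hΦc.mul (quad_cont _)) (Γ_cont a b) _
  have sum_zero : ∫ z, ∑ a, ∑ b, quadForm z ⁅Γ a b z, single a b (1 : ℂ)⁆ ∂μ = 0 := by
    rw [integral_finsetSum _ fun a _ => integrable_finsetSum _ fun b _ => Γ_int a b]
    refine Finset.sum_eq_zero fun a _ => ?_
    rw [integral_finsetSum _ fun b _ => Γ_int a b]
    exact Finset.sum_eq_zero fun b _ => derivative_zero a b
  have anticommutator_cont : Continuous fun z => quadForm z (G z * M + M * G z) :=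
    continuous_quadForm (by fun_prop)
  have gradient_cont : Continuous fun z => quadForm z (G z) := continuous_quadForm hG
  rw [integral_congr_ae (hμ.ae_quadForm_one.mono fun z hz =>
    sum_quadForm_lie_smul_add_smul_lie_single hz (Φ z) (G z) M), integral_const_mul,
    integral_sub (hμ.integrable (by fun_prop)) (hμ.integrable (by fun_prop))] at sum_zero
  exact sub_eq_zero.mp ((mul_eq_zero.mp sum_zero).resolve_left two_ne_zero)

end SphericalStein

section QuadFormVec

variable {ι κ : Type*} [Fintype ι] {r : ℝ} {A : κ → Matrix ι ι ℂ}

/-- The vector of observables `r • (⟨A k z, z⟩)ₖ` of the state `z`. For Hermitian `A k` the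
quadratic forms are real, and taking the real part is only a cast. -/
noncomputable def quadFormVec (r : ℝ) (A : κ → Matrix ι ι ℂ) (z : ι → ℂ) : EuclideanSpace ℝ κ :=
  WithLp.toLp 2 fun k => r * (quadForm z (A k)).re

theorem quadFormVec_apply (z : ι → ℂ) (k : κ) :
    quadFormVec r A z k = r * (quadForm z (A k)).re := rfl

theorem quadForm_anticommutator_div_two {B C : Matrix ι ι ℂ} (hB : B.IsHermitian)
    (hC : C.IsHermitian) (z : ι → ℂ) :
    quadForm z (B * C + C * B) / 2 = ((quadForm z (C * B)).re : ℂ) := by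
  rw [Complex.re_eq_add_conj, ← Complex.star_def, ← quadForm_conjTranspose, conjTranspose_mul,
    hB.eq, hC.eq, map_add, add_comm]

theorem continuous_quadFormVec : Continuous (quadFormVec r A) :=
  (PiLp.continuous_toLp 2 _).comp <| continuous_pi fun _ =>
    continuous_const.mul (Complex.continuous_re.comp (continuous_quadForm continuous_const))

/-- The Stein kernel of `quadFormVec r A`: up to the factor `r ^ 2 / card ι`, the covariance of the
observables `A j` and `A k` in the state `z`. -/
noncomputable def quadFormSteinKernel (r : ℝ) (A : κ → Matrix ι ι ℂ) (z : ι → ℂ) : Matrix κ κ ℝ :=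
  of fun j k => r ^ 2 / Fintype.card ι *
    ((quadForm z (A j * A k)).re - (quadForm z (A j)).re * (quadForm z (A k)).re)

theorem quadFormSteinKernel_apply (z : ι → ℂ) (j k : κ) :
    quadFormSteinKernel r A z j k = r ^ 2 / Fintype.card ι *
      ((quadForm z (A j * A k)).re - (quadForm z (A j)).re * (quadForm z (A k)).re) := rfl

theorem continuous_quadFormSteinKernel (j k : κ) :
    Continuous fun z => quadFormSteinKernel r A z j k :=
  have re_cont (M : Matrix ι ι ℂ) : Continuous fun z => (quadForm z M).re :=
    Complex.continuous_re.comp (continuous_quadForm continuous_const)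
  continuous_const.mul ((re_cont _).sub ((re_cont _).mul (re_cont _)))

variable [Fintype κ] [DecidableEq ι] {u : EuclideanSpace ℝ κ → ℝ}

theorem hasOrbitGradient_comp_quadFormVec [DecidableEq κ] (hA : ∀ k, (A k).IsHermitian)
    (hu : Differentiable ℝ u) :
    HasOrbitGradient (fun z => (u (quadFormVec r A z) : ℂ)) fun z =>
      ∑ k, ((fderiv ℝ u (quadFormVec r A z) (EuclideanSpace.single k 1) * r : ℝ) : ℂ) • A k := by
  intro L hL z
  have lie_isHermitian (k : κ) : (⁅A k, L⁆ : Matrix ι ι ℂ).IsHermitian := by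
    rw [IsHermitian, Ring.lie_def, conjTranspose_sub, conjTranspose_mul, conjTranspose_mul,
      (hA k).eq, ← star_eq_conjTranspose L, skewAdjoint.mem_iff.mp hL, neg_mul, mul_neg]
    abel
  have vec_deriv : HasDerivAt (fun t : ℝ => quadFormVec r A (NormedSpace.exp (t • L) *ᵥ z))
      (WithLp.toLp 2 fun k => r * (quadForm z ⁅A k, L⁆).re) 0 := by
    have coord_deriv : HasDerivAt
        (fun (t : ℝ) k => r * (quadForm (NormedSpace.exp (t • L) *ᵥ z) (A k)).re)
        (fun k => r * (quadForm z ⁅A k, L⁆).re) 0 :=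
      hasDerivAt_pi.mpr fun k => (Complex.reCLM.hasFDerivAt.comp_hasDerivAt 0
        (hasOrbitGradient_quadForm (A k) hL z)).const_mul r
    exact (PiLp.hasFDerivAt_toLp 2 _).comp_hasDerivAt 0 coord_deriv
  refine ((hu _).hasFDerivAt.comp_hasDerivAt 0 vec_deriv).ofReal_comp.congr_deriv ?_
  rw [zero_smul, NormedSpace.exp_zero, one_mulVec, fderiv_apply_eq_sum_single]
  simp only [Ring.lie_def, Finset.sum_mul, Finset.mul_sum, ← Finset.sum_sub_distrib,
    smul_mul_assoc, mul_smul_comm, ← smul_sub, map_sum, map_smul, smul_eq_mul,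
    Complex.ofReal_sum]
  refine Finset.sum_congr rfl fun k _ => ?_
  rw [← Ring.lie_def, ← ofReal_re_quadForm (lie_isHermitian k)]
  push_cast [Complex.ofReal_re]
  ring

variable {μ : Measure (ι → ℂ)} [IsProbabilityMeasure μ]

theorem IsUniformOnSphere.card_mul_integral_comp_quadFormVec_mul [DecidableEq κ]
    (hμ : IsUniformOnSphere μ) (hA : ∀ k, (A k).IsHermitian) (hA_trace : ∀ k, (A k).trace = 0)
    (hu : ContDiff ℝ 1 u) (j : κ) :
    Fintype.card ι * ∫ z, u (quadFormVec r A z) * (quadForm z (A j)).re ∂μ =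
      r * ∫ z, ∑ k, fderiv ℝ u (quadFormVec r A z) (EuclideanSpace.single k 1) *
        ((quadForm z (A j * A k)).re - (quadForm z (A j)).re * (quadForm z (A k)).re) ∂μ := by
  have fderiv_cont (k : κ) : Continuous fun z =>
      fderiv ℝ u (quadFormVec r A z) (EuclideanSpace.single k 1) :=
    ((hu.continuous_fderiv one_ne_zero).comp continuous_quadFormVec).clm_apply continuous_const
  have parts := hμ.integral_mul_quadForm_sub_trace
    (hasOrbitGradient_comp_quadFormVec (r := r) hA (hu.differentiable one_ne_zero))
    (Complex.continuous_ofReal.comp (hu.continuous.comp continuous_quadFormVec))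
    (continuous_finsetSum _ fun k _ => (Complex.continuous_ofReal.comp
      ((fderiv_cont k).mul continuous_const)).smul continuous_const) (A j)
  have left_eq (z : ι → ℂ) : (u (quadFormVec r A z) : ℂ) *
      (Fintype.card ι * quadForm z (A j) - (A j).trace) =
      ((Fintype.card ι * (u (quadFormVec r A z) * (quadForm z (A j)).re) : ℝ) : ℂ) := by
    rw [hA_trace, sub_zero, ← ofReal_re_quadForm (hA j)]
    push_cast [Complex.ofReal_re]
    ring
  have right_eq (c : κ → ℝ) (z : ι → ℂ) :
      quadForm z ((∑ k, ((c k * r : ℝ) : ℂ) • A k) * A j + A j * ∑ k, ((c k * r : ℝ) : ℂ) • A k) /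
        2 - quadForm z (∑ k, ((c k * r : ℝ) : ℂ) • A k) * quadForm z (A j) =
      ((r * ∑ k, c k * ((quadForm z (A j * A k)).re -
        (quadForm z (A j)).re * (quadForm z (A k)).re) : ℝ) : ℂ) := by
    simp only [Finset.sum_mul, Finset.mul_sum, ← Finset.sum_add_distrib, smul_mul_assoc,
      mul_smul_comm, ← smul_add, map_sum, map_smul, smul_eq_mul, Finset.sum_div,
      ← Finset.sum_sub_distrib, mul_div_assoc, quadForm_anticommutator_div_two (hA _) (hA j)]
    push_cast
    refine Finset.sum_congr rfl fun k _ => ?_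
    rw [ofReal_re_quadForm (hA j), ofReal_re_quadForm (hA k)]
    ring
  simp only [left_eq, right_eq, integral_complex_ofReal, integral_const_mul] at parts
  exact_mod_cast parts

theorem IsUniformOnSphere.isSteinKernel_quadFormVec [Nonempty ι] (hμ : IsUniformOnSphere μ)
    (hA : ∀ k, (A k).IsHermitian) (hA_trace : ∀ k, (A k).trace = 0) :
    IsSteinKernel μ (quadFormVec r A) (quadFormSteinKernel r A) := by
  classical
  intro u _ hu _ j
  have card_ne_zero : (Fintype.card ι : ℝ) ≠ 0 := Nat.cast_ne_zero.mpr Fintype.card_ne_zero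
  calc ∫ z, u (quadFormVec r A z) * quadFormVec r A z j ∂μ
      = r / Fintype.card ι *
        (Fintype.card ι * ∫ z, u (quadFormVec r A z) * (quadForm z (A j)).re ∂μ) := by
        rw [← mul_assoc, div_mul_cancel₀ _ card_ne_zero, ← integral_const_mul]
        simp only [quadFormVec_apply, mul_left_comm]
    _ = ∫ z, fderiv ℝ u (quadFormVec r A z) (WithLp.toLp 2 (quadFormSteinKernel r A z j)) ∂μ := by
        rw [hμ.card_mul_integral_comp_quadFormVec_mul hA hA_trace hu j, ← mul_assoc,
          ← integral_const_mul]
        refine integral_congr_ae (.of_forall fun z => ?_)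
        dsimp only
        rw [fderiv_apply_eq_sum_single, Finset.mul_sum]
        refine Finset.sum_congr rfl fun k _ => ?_
        change _ = _ * quadFormSteinKernel r A z j k
        rw [quadFormSteinKernel_apply]
        ring

end QuadFormVec

section SphericalMoments

variable {ι : Type*} [Fintype ι] [DecidableEq ι] {μ : Measure (ι → ℂ)} [IsProbabilityMeasure μ]

theorem IsUniformOnSphere.integrable_quadForm (hμ : IsUniformOnSphere μ) (M : Matrix ι ι ℂ) :
    Integrable (fun z => quadForm z M) μ :=
  hμ.integrable (continuous_quadForm continuous_const)

theorem IsUniformOnSphere.integrable_quadForm_mul_quadForm (hμ : IsUniformOnSphere μ)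
    (M N : Matrix ι ι ℂ) : Integrable (fun z => quadForm z M * quadForm z N) μ :=
  hμ.integrable ((continuous_quadForm continuous_const).mul (continuous_quadForm continuous_const))

theorem IsUniformOnSphere.card_mul_integral_quadForm (hμ : IsUniformOnSphere μ)
    (M : Matrix ι ι ℂ) : Fintype.card ι * ∫ z, quadForm z M ∂μ = M.trace := by
  have parts := hμ.integral_mul_quadForm_sub_trace (hasOrbitGradient_const 1) continuous_const
    continuous_const M
  simp only [one_mul, zero_mul, mul_zero, add_zero, map_zero, zero_div, sub_zero,
    integral_zero] at parts
  rw [integral_sub ((hμ.integrable_quadForm M).const_mul _) (integrable_const _),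
    integral_const_mul, integral_const, probReal_univ, one_smul] at parts
  exact sub_eq_zero.mp parts

theorem IsUniformOnSphere.card_mul_integral_quadForm_mul_quadForm (hμ : IsUniformOnSphere μ)
    (M N : Matrix ι ι ℂ) :
    Fintype.card ι * (Fintype.card ι + 1) * ∫ z, quadForm z M * quadForm z N ∂μ =
      M.trace * N.trace + (M * N).trace := by
  have parts := hμ.integral_mul_quadForm_sub_trace (hasOrbitGradient_quadForm M)
    (continuous_quadForm continuous_const) continuous_const N
  have left_eq (z : ι → ℂ) : quadForm z M * (Fintype.card ι * quadForm z N - N.trace) =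
      Fintype.card ι * (quadForm z M * quadForm z N) - N.trace * quadForm z M := by ring
  simp only [left_eq] at parts
  rw [integral_sub ((hμ.integrable_quadForm_mul_quadForm M N).const_mul _)
      ((hμ.integrable_quadForm M).const_mul _),
    integral_sub ((hμ.integrable_quadForm _).div_const _)
      (hμ.integrable_quadForm_mul_quadForm M N),
    integral_const_mul, integral_const_mul, integral_div] at parts
  have anticommutator_trace := hμ.card_mul_integral_quadForm (M * N + N * M)
  rw [trace_add, trace_mul_comm N M] at anticommutator_trace
  linear_combination Fintype.card ι * parts + anticommutator_trace / 2 +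
    N.trace * hμ.card_mul_integral_quadForm M

theorem IsUniformOnSphere.card_mul_integral_norm_quadForm_sub_sq [Nonempty ι]
    (hμ : IsUniformOnSphere μ) (M : Matrix ι ι ℂ) :
    ((Fintype.card ι * (Fintype.card ι + 1) *
        ∫ z, ‖quadForm z M - M.trace / Fintype.card ι‖ ^ 2 ∂μ : ℝ) : ℂ) =
      (M * Mᴴ).trace - (Fintype.card ι * ‖M.trace / Fintype.card ι‖ ^ 2 : ℝ) := by
  have card_ne_zero : (Fintype.card ι : ℂ) ≠ 0 := Nat.cast_ne_zero.mpr Fintype.card_ne_zero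
  obtain ⟨t, trace_eq⟩ : ∃ t, M.trace = Fintype.card ι * t :=
    ⟨M.trace / Fintype.card ι, (mul_div_cancel₀ _ card_ne_zero).symm⟩
  have trace_star_eq : Mᴴ.trace = Fintype.card ι * star t := by
    rw [trace_conjTranspose, trace_eq, star_mul', star_natCast]
  have mean_eq : ∫ z, quadForm z M ∂μ = t :=
    mul_left_cancel₀ card_ne_zero ((hμ.card_mul_integral_quadForm M).trans trace_eq)
  have mean_star_eq : ∫ z, quadForm z Mᴴ ∂μ = star t :=
    mul_left_cancel₀ card_ne_zero ((hμ.card_mul_integral_quadForm Mᴴ).trans trace_star_eq)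
  have second_moment := hμ.card_mul_integral_quadForm_mul_quadForm M Mᴴ
  have norm_sq_eq (w : ℂ) : ((‖w‖ ^ 2 : ℝ) : ℂ) = w * star w := by
    rw [Complex.ofReal_pow, ← Complex.mul_conj', Complex.star_def]
  have expand (z : ι → ℂ) : ((‖quadForm z M - t‖ ^ 2 : ℝ) : ℂ) =
      quadForm z M * quadForm z Mᴴ - (star t * quadForm z M + t * quadForm z Mᴴ - t * star t) := by
    rw [norm_sq_eq, quadForm_conjTranspose, star_sub]
    ring
  have linear_int : Integrable (fun z => star t * quadForm z M + t * quadForm z Mᴴ) μ :=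
    ((hμ.integrable_quadForm M).const_mul _).add ((hμ.integrable_quadForm Mᴴ).const_mul _)
  have affine_int :
      Integrable (fun z => star t * quadForm z M + t * quadForm z Mᴴ - t * star t) μ :=
    linear_int.sub (integrable_const _)
  rw [trace_eq, mul_div_cancel_left₀ _ card_ne_zero, Complex.ofReal_mul, Complex.ofReal_mul,
    Complex.ofReal_mul, norm_sq_eq, ← integral_complex_ofReal]
  simp only [expand]
  rw [integral_sub (hμ.integrable_quadForm_mul_quadForm M Mᴴ) affine_int,
    integral_sub linear_int (integrable_const _),
    integral_add ((hμ.integrable_quadForm M).const_mul _)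
      ((hμ.integrable_quadForm Mᴴ).const_mul _), integral_const_mul, integral_const_mul,
    integral_const, probReal_univ, one_smul, mean_eq, mean_star_eq]
  push_cast
  rw [trace_eq, trace_star_eq] at second_moment
  linear_combination second_moment

theorem IsUniformOnSphere.integral_re_quadForm_sub_sq_le [Nonempty ι] (hμ : IsUniformOnSphere μ)
    (M : Matrix ι ι ℂ) :
    ∫ z, ((quadForm z M).re - M.trace.re / Fintype.card ι) ^ 2 ∂μ ≤
      (M * Mᴴ).trace.re / (Fintype.card ι * (Fintype.card ι + 1)) := by
  have re_sq_le (z : ι → ℂ) : ((quadForm z M).re - M.trace.re / Fintype.card ι) ^ 2 ≤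
      ‖quadForm z M - M.trace / Fintype.card ι‖ ^ 2 := by
    rw [sq_le_sq, abs_norm]
    simpa using Complex.abs_re_le_norm (quadForm z M - M.trace / Fintype.card ι)
  have norm_sq_int : Integrable (fun z => ‖quadForm z M - M.trace / Fintype.card ι‖ ^ 2) μ :=
    hμ.integrable (((continuous_quadForm continuous_const).sub continuous_const).norm.pow 2)
  have variance_eq := congrArg Complex.re (hμ.card_mul_integral_norm_quadForm_sub_sq M)
  rw [Complex.sub_re, Complex.ofReal_re, Complex.ofReal_re] at variance_eq
  rw [le_div_iff₀' (by positivity)]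
  calc _ ≤ Fintype.card ι * (Fintype.card ι + 1) *
        ∫ z, ‖quadForm z M - M.trace / Fintype.card ι‖ ^ 2 ∂μ := by
        exact mul_le_mul_of_nonneg_left (integral_mono_of_nonneg (.of_forall fun z => sq_nonneg _)
          norm_sq_int (.of_forall re_sq_le)) (by positivity)
    _ ≤ (M * Mᴴ).trace.re := variance_eq.trans_le (sub_le_self _ (by positivity))

end SphericalMoments

section SchattenFour

open scoped ComplexOrder

variable {ι : Type*} [Fintype ι]

/-- The square `‖B‖₄²` of the Schatten 4-norm of a Hermitian matrix. -/
noncomputable def schattenFourSq (B : Matrix ι ι ℂ) : ℝ := √(B * B * B * B).trace.re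

theorem schattenFourSq_nonneg (B : Matrix ι ι ℂ) : 0 ≤ schattenFourSq B := Real.sqrt_nonneg _

theorem re_trace_mul_conjTranspose_nonneg (P : Matrix ι ι ℂ) : 0 ≤ (P * Pᴴ).trace.re :=
  (Complex.nonneg_iff.mp (posSemidef_self_mul_conjTranspose P).trace_nonneg).1

theorem re_trace_mul_conjTranspose_sq_le (P Q : Matrix ι ι ℂ) :
    (P * Qᴴ).trace.re ^ 2 ≤ (P * Pᴴ).trace.re * (Q * Qᴴ).trace.re := by
  classical
  -- The inner product on matrices weighted by the identity is the Frobenius one.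
  let := Matrix.toMatrixSeminormedAddCommGroup (1 : Matrix ι ι ℂ) .one
  let := Matrix.toMatrixInnerProductSpace (1 : Matrix ι ι ℂ) .one
  have inner_eq (P Q : Matrix ι ι ℂ) : inner ℂ Q P = (P * Qᴴ).trace :=
    congrArg (fun R => (R * Qᴴ).trace) (mul_one P)
  calc (P * Qᴴ).trace.re ^ 2 ≤ ‖(P * Qᴴ).trace‖ ^ 2 := by
        rw [sq_le_sq, abs_norm]
        exact Complex.abs_re_le_norm _
    _ = ‖inner ℂ Q P‖ * ‖inner ℂ P Q‖ := by rw [norm_inner_symm P Q, ← sq, inner_eq]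
    _ ≤ _ := by
        rw [← inner_eq P P, ← inner_eq Q Q, mul_comm (inner ℂ P P).re]
        exact inner_mul_inner_self_le (𝕜 := ℂ) Q P

variable {B C : Matrix ι ι ℂ}

theorem schattenFourSq_sq (hB : B.IsHermitian) :
    schattenFourSq B ^ 2 = (B * B * (B * B)ᴴ).trace.re := by
  have square_eq : B * B * B * B = B * B * (B * B)ᴴ := by
    rw [conjTranspose_mul, hB.eq, mul_assoc (B * B)]
  rw [schattenFourSq, square_eq, Real.sq_sqrt (re_trace_mul_conjTranspose_nonneg _)]

theorem re_trace_mul_mul_conjTranspose_le (hB : B.IsHermitian) (hC : C.IsHermitian) :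
    (B * C * (B * C)ᴴ).trace.re ≤ schattenFourSq B * schattenFourSq C := by
  have trace_eq : (B * C * (B * C)ᴴ).trace = (B * B * (C * C)ᴴ).trace := by
    rw [conjTranspose_mul, conjTranspose_mul, hB.eq, hC.eq, ← mul_assoc, trace_mul_comm]
    simp only [mul_assoc]
  rw [trace_eq]
  refine le_of_abs_le <| abs_le_of_sq_le_sq ?_
    (mul_nonneg (schattenFourSq_nonneg B) (schattenFourSq_nonneg C))
  rw [mul_pow, schattenFourSq_sq hB, schattenFourSq_sq hC]
  exact re_trace_mul_conjTranspose_sq_le _ _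

theorem one_le_sqrt_card_mul_schattenFourSq (hB : B.IsHermitian) (hB_norm : (B * B).trace = 1) :
    1 ≤ √(Fintype.card ι) * schattenFourSq B := by
  classical
  refine le_of_abs_le <| abs_le_of_sq_le_sq ?_
    (mul_nonneg (Real.sqrt_nonneg _) (schattenFourSq_nonneg B))
  rw [mul_pow, schattenFourSq_sq hB, Real.sq_sqrt (Nat.cast_nonneg _)]
  simpa [hB_norm, mul_comm] using re_trace_mul_conjTranspose_sq_le (B * B) 1

theorem card_le_card_mul_sum_schattenFourSq [Nonempty ι] {κ : Type*} [Fintype κ]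
    {A : κ → Matrix ι ι ℂ} (hA : ∀ k, (A k).IsHermitian)
    (hA_norm : ∀ k, (A k * A k).trace = 1) :
    (Fintype.card κ : ℝ) ≤ Fintype.card ι * ∑ k, schattenFourSq (A k) := by
  have one_le_card : (1 : ℝ) ≤ Fintype.card ι := Nat.one_le_cast.mpr Fintype.card_pos
  rw [Finset.mul_sum, ← nsmul_one, ← Finset.card_univ, ← Finset.sum_const]
  gcongr with k
  refine (one_le_sqrt_card_mul_schattenFourSq (hA k) (hA_norm k)).trans ?_
  gcongr
  · exact schattenFourSq_nonneg _
  · exact Real.sqrt_le_iff.mpr ⟨Nat.cast_nonneg _, le_self_pow₀ one_le_card two_ne_zero⟩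

theorem schattenFourSq_smul (c : ℝ) (B : Matrix ι ι ℂ) :
    schattenFourSq ((c : ℂ) • B) = c ^ 2 * schattenFourSq B := by
  have trace_eq : (((c : ℂ) • B) * (c : ℂ) • B * (c : ℂ) • B * (c : ℂ) • B).trace.re =
      (c ^ 2) ^ 2 * (B * B * B * B).trace.re := by
    simp only [smul_mul_assoc, mul_smul_comm, smul_smul, trace_smul, smul_eq_mul]
    rw [← Complex.re_ofReal_mul]
    push_cast
    ring_nf
  rw [schattenFourSq, trace_eq, Real.sqrt_mul (sq_nonneg _), Real.sqrt_sq (sq_nonneg c),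
    schattenFourSq]

theorem schattenFourSq_kronecker_one {τ : Type*} [Fintype τ] [DecidableEq τ] (B : Matrix ι ι ℂ) :
    schattenFourSq (B ⊗ₖ (1 : Matrix τ τ ℂ)) = √(Fintype.card τ) * schattenFourSq B := by
  rw [schattenFourSq, schattenFourSq, ← Real.sqrt_mul (Nat.cast_nonneg _)]
  simp only [← mul_kronecker_mul, mul_one, trace_kronecker, trace_one]
  rw [mul_comm, ← Complex.ofReal_natCast, Complex.re_ofReal_mul]

end SchattenFour

section SteinDiscrepancy

attribute [local instance] Matrix.frobeniusNormedAddCommGroup Matrix.frobeniusNormedSpace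

variable {ι κ : Type*} [Fintype ι] {A : κ → Matrix ι ι ℂ}

/-- The fluctuation of the matrix of second-order observables `A j * A k` around its mean, in the
normalization of `quadFormSteinKernel r A` with `r ^ 2 = card ι * (card ι + 1)`. -/
noncomputable def productFluctuation (A : κ → Matrix ι ι ℂ) (z : ι → ℂ) : Matrix κ κ ℝ :=
  of fun j k => (Fintype.card ι + 1) *
    ((quadForm z (A j * A k)).re - (A j * A k).trace.re / Fintype.card ι)

theorem continuous_productFluctuation (j k : κ) :
    Continuous fun z => productFluctuation A z j k :=
  continuous_const.mul
    ((Complex.continuous_re.comp (continuous_quadForm continuous_const)).sub continuous_const)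

theorem quadFormSteinKernel_sub_one [DecidableEq κ] [Nonempty ι] {r : ℝ}
    (hr : r ^ 2 = Fintype.card ι * (Fintype.card ι + 1))
    (hA_orth : ∀ j k, (A j * A k).trace = if j = k then 1 else 0) (z : ι → ℂ) :
    quadFormSteinKernel r A z - 1 = productFluctuation A z + (Fintype.card ι : ℝ)⁻¹ •
      (1 - vecMulVec (quadFormVec r A z).ofLp (quadFormVec r A z).ofLp) := by
  ext j k
  have card_ne_zero : (Fintype.card ι : ℝ) ≠ 0 := Nat.cast_ne_zero.mpr Fintype.card_ne_zero
  have trace_eq : (A j * A k).trace.re = (1 : Matrix κ κ ℝ) j k := by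
    rw [hA_orth, one_apply]
    split_ifs <;> simp
  rw [Matrix.sub_apply, Matrix.add_apply, Matrix.smul_apply, Matrix.sub_apply, vecMulVec_apply,
    quadFormSteinKernel_apply, quadFormVec_apply, quadFormVec_apply, productFluctuation, of_apply,
    trace_eq, smul_eq_mul, mul_mul_mul_comm r, ← sq, hr]
  field_simp
  ring

variable [DecidableEq ι] {μ : Measure (ι → ℂ)} [IsProbabilityMeasure μ]

theorem IsUniformOnSphere.integral_productFluctuation_sq_le [Nonempty ι] (hμ : IsUniformOnSphere μ)
    (hA : ∀ k, (A k).IsHermitian) (j k : κ) :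
    ∫ z, productFluctuation A z j k ^ 2 ∂μ ≤ 2 * (schattenFourSq (A j) * schattenFourSq (A k)) := by
  have one_le_card : (1 : ℝ) ≤ Fintype.card ι := Nat.one_le_cast.mpr Fintype.card_pos
  have trace_nonneg : 0 ≤ (A j * A k * (A j * A k)ᴴ).trace.re :=
    re_trace_mul_conjTranspose_nonneg _
  simp only [productFluctuation, of_apply, mul_pow]
  rw [integral_const_mul]
  calc _ ≤ ((Fintype.card ι : ℝ) + 1) ^ 2 * ((A j * A k * (A j * A k)ᴴ).trace.re /
        (Fintype.card ι * (Fintype.card ι + 1))) := by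
        gcongr
        exact hμ.integral_re_quadForm_sub_sq_le _
    _ = (1 + 1 / Fintype.card ι) * (A j * A k * (A j * A k)ᴴ).trace.re := by
        field_simp
    _ ≤ 2 * (A j * A k * (A j * A k)ᴴ).trace.re := by
        gcongr
        linarith [(div_le_one₀ (zero_lt_one.trans_le one_le_card)).mpr one_le_card]
    _ ≤ _ := by
        gcongr
        exact re_trace_mul_mul_conjTranspose_le (hA j) (hA k)

variable [Fintype κ] {r : ℝ}

theorem IsUniformOnSphere.integral_norm_productFluctuation_le [Nonempty ι]
    (hμ : IsUniformOnSphere μ) (hA : ∀ k, (A k).IsHermitian) :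
    ∫ z, ‖productFluctuation A z‖ ∂μ ≤ 2 * ∑ k, schattenFourSq (A k) := by
  have sum_nonneg : 0 ≤ ∑ k, schattenFourSq (A k) :=
    Finset.sum_nonneg fun k _ => schattenFourSq_nonneg (A k)
  have sq_int (j k : κ) : Integrable (fun z => productFluctuation A z j k ^ 2) μ :=
    hμ.integrable ((continuous_productFluctuation j k).pow 2)
  have norm_int : Integrable (fun z => ‖productFluctuation A z‖) μ :=
    integrable_frobenius_norm fun j k => hμ.integrable (continuous_productFluctuation j k)
  have norm_memLp : MemLp (fun z => ‖productFluctuation A z‖) 2 μ := by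
    rw [memLp_two_iff_integrable_sq norm_int.aestronglyMeasurable]
    simp only [frobenius_norm_sq_eq_sum]
    exact integrable_finsetSum _ fun j _ => integrable_finsetSum _ fun k _ => sq_int j k
  refine (integral_le_sqrt_integral_sq norm_memLp).trans (Real.sqrt_le_iff.mpr ⟨by positivity, ?_⟩)
  calc ∫ z, ‖productFluctuation A z‖ ^ 2 ∂μ
      = ∑ j, ∑ k, ∫ z, productFluctuation A z j k ^ 2 ∂μ := by
        simp only [frobenius_norm_sq_eq_sum]
        rw [integral_finsetSum _ fun j _ => integrable_finsetSum _ fun k _ => sq_int j k]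
        simp only [integral_finsetSum _ fun k _ => sq_int _ k]
    _ ≤ ∑ j, ∑ k, 2 * (schattenFourSq (A j) * schattenFourSq (A k)) := by
        gcongr with j _ k _
        exact hμ.integral_productFluctuation_sq_le hA j k
    _ = 2 * (∑ k, schattenFourSq (A k)) ^ 2 := by
        simp only [← Finset.mul_sum, ← Finset.sum_mul, sq]
    _ ≤ (2 * ∑ k, schattenFourSq (A k)) ^ 2 := by
        nlinarith [sq_nonneg (∑ k, schattenFourSq (A k))]

theorem IsUniformOnSphere.integral_norm_quadFormVec_sq (hμ : IsUniformOnSphere μ)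
    (hr : r ^ 2 = Fintype.card ι * (Fintype.card ι + 1)) (hA : ∀ k, (A k).IsHermitian)
    (hA_trace : ∀ k, (A k).trace = 0) (hA_norm : ∀ k, (A k * A k).trace = 1) :
    ∫ z, ‖quadFormVec r A z‖ ^ 2 ∂μ = Fintype.card κ := by
  have coord_int (k : κ) : Integrable (fun z => quadFormVec r A z k ^ 2) μ :=
    hμ.integrable (((PiLp.continuous_apply 2 _ k).comp continuous_quadFormVec).pow 2)
  have coord_sq (k : κ) : ∫ z, quadFormVec r A z k ^ 2 ∂μ = 1 := by
    have second_moment := hμ.card_mul_integral_quadForm_mul_quadForm (A k) (A k)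
    rw [hA_trace, hA_norm, zero_mul, zero_add] at second_moment
    have sq_eq (z : ι → ℂ) :
        quadForm z (A k) * quadForm z (A k) = ((quadForm z (A k)).re ^ 2 : ℝ) := by
      rw [sq, Complex.ofReal_mul, ofReal_re_quadForm (hA k)]
    simp only [sq_eq, integral_complex_ofReal] at second_moment
    simp only [quadFormVec_apply, mul_pow, hr, integral_const_mul]
    apply Complex.ofReal_injective
    push_cast
    exact second_moment
  simp only [EuclideanSpace.real_norm_sq_eq]
  rw [integral_finsetSum _ fun k _ => coord_int k]
  simp [coord_sq]

variable [DecidableEq κ]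

theorem frobenius_norm_one_le_card : ‖(1 : Matrix κ κ ℝ)‖ ≤ Fintype.card κ := by
  refine le_of_abs_le <| abs_le_of_sq_le_sq ?_ (Nat.cast_nonneg _)
  have norm_sq_eq : ‖(1 : Matrix κ κ ℝ)‖ ^ 2 = Fintype.card κ := by
    simp [frobenius_norm_sq_eq_sum, one_apply]
  rw [norm_sq_eq]
  exact_mod_cast Nat.le_self_pow two_ne_zero _

variable [Nonempty ι]

theorem IsUniformOnSphere.integral_norm_quadFormSteinKernel_sub_one_le (hμ : IsUniformOnSphere μ)
    (hr : r ^ 2 = Fintype.card ι * (Fintype.card ι + 1)) (hA : ∀ k, (A k).IsHermitian)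
    (hA_trace : ∀ k, (A k).trace = 0)
    (hA_orth : ∀ j k, (A j * A k).trace = if j = k then 1 else 0) :
    ∫ z, ‖quadFormSteinKernel r A z - 1‖ ∂μ ≤ 4 * ∑ k, schattenFourSq (A k) := by
  have hA_norm (k : κ) : (A k * A k).trace = 1 := (hA_orth k k).trans (if_pos rfl)
  have card_pos : (0 : ℝ) < Fintype.card ι := Nat.cast_pos.mpr Fintype.card_pos
  have fluctuation_int : Integrable (fun z => ‖productFluctuation A z‖) μ :=
    integrable_frobenius_norm fun j k => hμ.integrable (continuous_productFluctuation j k)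
  have norm_sq_int : Integrable (fun z => ‖quadFormVec r A z‖ ^ 2) μ :=
    hμ.integrable (continuous_quadFormVec.norm.pow 2)
  have remainder_int : Integrable (fun z =>
      (Fintype.card ι : ℝ)⁻¹ * (Fintype.card κ + ‖quadFormVec r A z‖ ^ 2)) μ :=
    ((integrable_const _).add norm_sq_int).const_mul _
  have norm_le (z : ι → ℂ) : ‖quadFormSteinKernel r A z - 1‖ ≤ ‖productFluctuation A z‖ +
      (Fintype.card ι : ℝ)⁻¹ * (Fintype.card κ + ‖quadFormVec r A z‖ ^ 2) := by
    rw [quadFormSteinKernel_sub_one hr hA_orth]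
    refine (norm_add_le _ _).trans (add_le_add_right ?_ _)
    rw [norm_smul, norm_inv, RCLike.norm_natCast]
    gcongr
    refine (norm_sub_le _ _).trans ?_
    rw [frobenius_norm_vecMulVec_self]
    gcongr
    exact frobenius_norm_one_le_card
  calc ∫ z, ‖quadFormSteinKernel r A z - 1‖ ∂μ
      ≤ ∫ z, ‖productFluctuation A z‖ +
        (Fintype.card ι : ℝ)⁻¹ * (Fintype.card κ + ‖quadFormVec r A z‖ ^ 2) ∂μ :=
        integral_mono_of_nonneg (.of_forall fun z => norm_nonneg _)
          (fluctuation_int.add remainder_int) (.of_forall norm_le)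
    _ = ∫ z, ‖productFluctuation A z‖ ∂μ +
        2 * ((Fintype.card ι : ℝ)⁻¹ * Fintype.card κ) := by
        rw [integral_add fluctuation_int remainder_int,
          integral_const_mul, integral_add (integrable_const _) norm_sq_int,
          hμ.integral_norm_quadFormVec_sq hr hA hA_trace hA_norm, integral_const, probReal_univ,
          one_smul]
        ring
    _ ≤ 2 * ∑ k, schattenFourSq (A k) + 2 * ∑ k, schattenFourSq (A k) := by
        gcongr
        · exact hμ.integral_norm_productFluctuation_le hA
        · rw [inv_mul_le_iff₀ card_pos]
          exact card_le_card_mul_sum_schattenFourSq hA hA_norm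
    _ = _ := by ring

open scoped NNReal in
theorem IsUniformOnSphere.norm_integral_comp_quadFormVec_sub_integral_stdGaussian_le
    (hμ : IsUniformOnSphere μ) (hr : r ^ 2 = Fintype.card ι * (Fintype.card ι + 1))
    (hA : ∀ k, (A k).IsHermitian) (hA_trace : ∀ k, (A k).trace = 0)
    (hA_orth : ∀ j k, (A j * A k).trace = if j = k then 1 else 0)
    {f : EuclideanSpace ℝ κ → ℝ} {K : ℝ≥0} (hK : LipschitzWith K f) :
    ‖∫ z, f (quadFormVec r A z) ∂μ - ∫ x, f x ∂stdGaussian (EuclideanSpace ℝ κ)‖ ≤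
      K * (4 * ∑ k, schattenFourSq (A k)) :=
  ((hμ.isSteinKernel_quadFormVec hA hA_trace).norm_integral_comp_sub_integral_stdGaussian_le
      (hμ.integrable continuous_quadFormVec)
      (fun j k => hμ.integrable (continuous_quadFormSteinKernel j k)) hK).trans <|
    mul_le_mul_of_nonneg_left
      (hμ.integral_norm_quadFormSteinKernel_sub_one_le hr hA hA_trace hA_orth) K.2

end SteinDiscrepancy

section NormalizedAmplification

variable {ι τ : Type*} [Fintype τ] [DecidableEq τ]

/-- `B ⊗ I`, rescaled so that it has the same Hilbert–Schmidt norm as `B`. -/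
noncomputable def normalizedAmplification (τ : Type*) [Fintype τ] [DecidableEq τ]
    (B : Matrix ι ι ℂ) : Matrix (ι × τ) (ι × τ) ℂ :=
  (((√(Fintype.card τ))⁻¹ : ℝ) : ℂ) • (B ⊗ₖ (1 : Matrix τ τ ℂ))

theorem isHermitian_normalizedAmplification {B : Matrix ι ι ℂ} (hB : B.IsHermitian) :
    (normalizedAmplification τ B).IsHermitian := by
  rw [IsHermitian, normalizedAmplification, conjTranspose_smul, conjTranspose_kronecker, hB.eq,
    conjTranspose_one, Complex.star_def, Complex.conj_ofReal]

variable [Fintype ι]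

theorem trace_normalizedAmplification (B : Matrix ι ι ℂ) :
    (normalizedAmplification τ B).trace = (√(Fintype.card τ) : ℝ) * B.trace := by
  rw [normalizedAmplification, trace_smul, trace_kronecker, trace_one, smul_eq_mul, mul_left_comm,
    mul_comm, ← Complex.ofReal_natCast, ← Complex.ofReal_mul, inv_mul_eq_div, Real.div_sqrt]

theorem quadForm_normalizedAmplification [Nonempty τ] (z : ι × τ → ℂ) (B : Matrix ι ι ℂ) :
    √(Fintype.card (ι × τ) * (Fintype.card (ι × τ) + 1)) *
        (quadForm z (normalizedAmplification τ B)).re =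
      √(Fintype.card ι * (Fintype.card ι * Fintype.card τ + 1)) *
        (quadForm z (B ⊗ₖ (1 : Matrix τ τ ℂ))).re := by
  have sqrt_pos : 0 < √(Fintype.card τ : ℝ) :=
    Real.sqrt_pos.mpr (Nat.cast_pos.mpr Fintype.card_pos)
  have sqrt_split : √(Fintype.card (ι × τ) * (Fintype.card (ι × τ) + 1) : ℝ) =
      √(Fintype.card ι * (Fintype.card ι * Fintype.card τ + 1)) * √(Fintype.card τ) := by
    rw [← Real.sqrt_mul (by positivity), Fintype.card_prod, Nat.cast_mul, mul_right_comm]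
  rw [sqrt_split, normalizedAmplification, map_smul, smul_eq_mul, Complex.re_ofReal_mul, mul_assoc,
    mul_inv_cancel_left₀ sqrt_pos.ne']

theorem trace_normalizedAmplification_mul [Nonempty τ] (B C : Matrix ι ι ℂ) :
    (normalizedAmplification τ B * normalizedAmplification τ C).trace = (B * C).trace := by
  have inv_sqrt_sq : (√(Fintype.card τ))⁻¹ * (√(Fintype.card τ))⁻¹ * Fintype.card τ = 1 := by
    rw [← mul_inv, Real.mul_self_sqrt (Nat.cast_nonneg _)]
    exact inv_mul_cancel₀ (Nat.cast_ne_zero.mpr Fintype.card_ne_zero)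
  rw [normalizedAmplification, normalizedAmplification, smul_mul_smul_comm, ← mul_kronecker_mul,
    mul_one, trace_smul, trace_kronecker, trace_one, smul_eq_mul, mul_left_comm,
    ← Complex.ofReal_natCast, ← Complex.ofReal_mul, ← Complex.ofReal_mul, inv_sqrt_sq,
    Complex.ofReal_one, mul_one]

theorem schattenFourSq_normalizedAmplification (B : Matrix ι ι ℂ) :
    schattenFourSq (normalizedAmplification τ B) = schattenFourSq B / √(Fintype.card τ) := by
  rw [normalizedAmplification, schattenFourSq_smul, schattenFourSq_kronecker_one]
  rcases isEmpty_or_nonempty τ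
  · simp
  · field_simp

end NormalizedAmplification

theorem isUniformOnSphere_map {Ω ι : Type*} [MeasurableSpace Ω] [Fintype ι] [DecidableEq ι]
    {P : Measure Ω} {Z : Ω → ι → ℂ} (hZ : Measurable Z)
    (hZ_sphere : ∀ ω, ∑ j, Complex.normSq (Z ω j) = 1)
    (hZ_invariant : ∀ V ∈ unitaryGroup ι ℂ, P.map (fun ω => V *ᵥ Z ω) = P.map Z) :
    IsUniformOnSphere (P.map Z) where
  ae_quadForm_one := by
    have sphere_meas : MeasurableSet {z : ι → ℂ | quadForm z 1 = 1} :=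
      (isClosed_eq (continuous_quadForm continuous_const) continuous_const).measurableSet
    refine (ae_map_iff hZ.aemeasurable sphere_meas).mpr (.of_forall fun ω => ?_)
    rw [quadForm_apply, one_mulVec, dotProduct, ← Complex.ofReal_one, ← hZ_sphere ω,
      Complex.ofReal_sum]
    simp only [Pi.star_apply, Complex.normSq_eq_conj_mul_self, Complex.star_def]
  map_mulVec V hV := by
    rw [Measure.map_map (by fun_prop) hZ]
    exact hZ_invariant V hV

theorem lipschitzWith_one_comp_ofLp {κ : Type*} [Fintype κ] {f : (κ → ℝ) → ℝ}
    (hf : ∀ x y, |f x - f y| ≤ √(∑ i, (x i - y i) ^ 2)) :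
    LipschitzWith 1 fun x : EuclideanSpace ℝ κ => f x.ofLp :=
  .of_dist_le_mul fun x y => by
    simpa [EuclideanSpace.dist_eq, Real.dist_eq, sq_abs] using hf x.ofLp y.ofLp

theorem stmt6 :
    ∃ C : ℝ, 0 < C ∧
      ∀ (n s d : ℕ) (_ : 1 ≤ n) (_ : 1 ≤ s) (Ω : Type u) [MeasurableSpace Ω]
        (P : Measure Ω) [IsProbabilityMeasure P]
        (Z : Ω → (Fin n × Fin s) → ℂ) (_ : Measurable Z)
        -- Z takes values in the unit sphere of ℂⁿ ⊗ ℂˢ ≅ ℂ^{ns}: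
        (_ : ∀ ω, ∑ j, Complex.normSq (Z ω j) = 1)
        -- the law of Z is invariant under the unitary group (uniform on the sphere):
        (_ : ∀ V ∈ Matrix.unitaryGroup (Fin n × Fin s) ℂ,
          Measure.map (fun ω => Matrix.mulVec V (Z ω)) P = Measure.map Z P)
        (B : Fin d → Matrix (Fin n) (Fin n) ℂ)
        (_ : ∀ j, (B j).IsHermitian) (_ : ∀ j, (B j).trace = 0)
        (_ : ∀ j k, ((B j) * (B k)).trace = if j = k then (1 : ℂ) else 0)
        (f : (Fin d → ℝ) → ℝ)
        (_ : ∀ x y : Fin d → ℝ, |f x - f y| ≤ Real.sqrt (∑ i, (x i - y i) ^ 2)),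
        |(∫ ω, f (fun j => Real.sqrt ((n : ℝ) * ((n : ℝ) * (s : ℝ) + 1)) *
              (star (Z ω) ⬝ᵥ
                ((B j ⊗ₖ (1 : Matrix (Fin s) (Fin s) ℂ)).mulVec (Z ω))).re) ∂P) -
            ∫ x, f x ∂(Measure.pi fun _ : Fin d => gaussianReal 0 1)| ≤
          (C / Real.sqrt s) *
            ∑ j, Real.sqrt ((((B j) * (B j) * (B j) * (B j)).trace).re) := by
  refine ⟨4, four_pos, fun n s d hn hs Ω _ P _ Z hZ hZ_sphere hZ_invariant B hB hB_trace hB_orth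
    f hf => ?_⟩
  have : NeZero n := ⟨Nat.one_le_iff_ne_zero.mp hn⟩
  have : NeZero s := ⟨Nat.one_le_iff_ne_zero.mp hs⟩
  have : IsProbabilityMeasure (P.map Z) := Measure.isProbabilityMeasure_map hZ.aemeasurable
  let A : Fin d → Matrix (Fin n × Fin s) (Fin n × Fin s) ℂ := fun j =>
    normalizedAmplification (Fin s) (B j)
  let r : ℝ := √(Fintype.card (Fin n × Fin s) * (Fintype.card (Fin n × Fin s) + 1))
  have f_lip := lipschitzWith_one_comp_ofLp hf
  have bound := (isUniformOnSphere_map hZ hZ_sphere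
    hZ_invariant).norm_integral_comp_quadFormVec_sub_integral_stdGaussian_le (r := r) (A := A)
    (Real.sq_sqrt (by positivity)) (fun j => isHermitian_normalizedAmplification (hB j))
    (fun j => by rw [trace_normalizedAmplification, hB_trace, mul_zero])
    (fun j k => (trace_normalizedAmplification_mul (B j) (B k)).trans (hB_orth j k)) f_lip
  have comp_cont : Continuous fun z => f (quadFormVec r A z).ofLp :=
    f_lip.continuous.comp continuous_quadFormVec
  rw [integral_map hZ.aemeasurable comp_cont.aestronglyMeasurable, ← map_pi_eq_stdGaussian,
    integral_map (by fun_prop) f_lip.continuous.aestronglyMeasurable] at bound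
  simp only [A, r, quadFormVec, quadForm_normalizedAmplification,
    schattenFourSq_normalizedAmplification, ← Finset.sum_div, Fintype.card_fin] at bound
  refine bound.trans_eq ?_
  simp only [schattenFourSq, NNReal.coe_one, one_mul]
  ring
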